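/- Let Ω₀ be a smooth, origin-symmetric, strictly convex body in ℝⁿ (n ≥ 2), let f : S^{n−1} → (0,∞) be smooth and even, let φ : (0,∞) → (0,∞) be smooth, and assume Condition (i) or Condition (ii) holds. Let Ω_t be a smooth, origin-symmetric, strictly convex solution of the flow on [0,∞) with initial body Ω₀, with support functions h(·,t) and radial functions ρ(·,t). Then there exists a constant C > 0, independent of t, such that 1/C ≤ h(x,t) ≤ C for all (x,t) ∈ S^{n−1} × (0,∞), 1/C ≤ ρ(u,t) ≤ C for all (u,t) ∈ S^{n−1} × (0,∞), and 1/C ≤ η(t) ≤ C for all t ∈ (0,∞). -/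

import Mathlib

/-!
Write `h_t = H t`, `a_t = f / φ(1/h_t)` and let
`J_t = h_t det(∇²h_t + h_t I) / (|∇h_t|² + h_t²)^{n/2}`
be the density of the spherical measure pulled back by the map that sends an outer normal to the
direction of its support point. Changing variables by this map (`sphInt_gaussJac_mul`) gives
`∫ J_t = |S^{n-1}|`, and `η` is chosen precisely so that `∫ η a_t = ∫ J_t`. The flow equation reads
`∂ₜh = h (1 - η a / J)`. Two functionals are monotone along it.

* The entropy `∫ log γ_t`, where `γ_t = 1/ρ_t` is the gauge of the body, does not increase
  (`entropy_le`): formally its derivative is `-∫ J ∂ₜh / h = ∫ (η a - J) = 0`. As the gauge is a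
  maximum `γ_t(u) = max_x ⟨x, u⟩ / h_t(x)`, one-sided difference quotients suffice, and the
  differentiability of `γ` in time is never needed. By symmetry `γ_t(u) ≥ |⟨x, u⟩| / h_t(x)`, and
  `∫ log |⟨x, u⟩| du` is a finite constant independent of `x`, so `h_t` is bounded below
  (`exists_lower_bound`).
* Either structural condition provides `g` (`ℜ(1/s)` or `-ℜ(1/s)`) with `g'(s) = -1/(s φ(1/s))`,
  and `∫ f g(h_t)` does not decrease, its derivative being `∫ (η a - J)² / (η J)`
  (`potential_le`). If `h_t` were huge at one point, then by symmetry the body would contain a long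
  segment `[-p, p]`, whence `h_t(x) ≥ |⟨p, x⟩|` would be large outside a thin band around `p^⊥`,
  where the lower bound controls `g(h_t)`. Since `g` is strictly decreasing this would push
  `∫ f g(h_t)` below its initial value (`exists_upper_bound`).

The bounds for `ρ` and `η` follow from those for `h`.
-/

noncomputable section

open Metric MeasureTheory Set Filter Topology
open scoped RealInnerProductSpace NNReal

/-- Abbreviation for `n`-dimensional Euclidean space. -/
abbrev Euc (n : ℕ) : Type := EuclideanSpace ℝ (Fin n)

/-- The unit sphere `S^{n-1}` in `ℝⁿ`, as a set. -/
abbrev USphere (n : ℕ) : Set (Euc n) := Metric.sphere (0 : Euc n) 1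

/-- The surface (spherical Lebesgue) measure on the unit sphere. -/
def sphMeasure (n : ℕ) : Measure (USphere n) :=
  (volume : Measure (Euc n)).toSphere

/-- Total surface measure `|S^{n-1}|` of the unit sphere. -/
def sphArea (n : ℕ) : ℝ := (sphMeasure n Set.univ).toReal

/-- Integral over the unit sphere with respect to the spherical Lebesgue measure. -/
def sphInt (n : ℕ) (g : Euc n → ℝ) : ℝ :=
  ∫ x : USphere n, g x ∂(sphMeasure n)

/-- The covariant (spherical) gradient on `S^{n-1}` of the restriction of `F`,
i.e. the tangential component of the Euclidean gradient of `F`. -/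
def sphGrad (n : ℕ) (F : Euc n → ℝ) (x : Euc n) : Euc n :=
  gradient F x - ⟪gradient F x, x⟫ • x

/-- `√(|∇h|² + h²)` for the (1-homogeneous extension of the) function `F` at `x`. -/
def radTerm (n : ℕ) (F : Euc n → ℝ) (x : Euc n) : ℝ :=
  Real.sqrt (‖sphGrad n F x‖ ^ 2 + F x ^ 2)

/-- The Euclidean Hessian operator of `F` at `x`. For a positively 1-homogeneous `F`
this operator kills `x` and restricts on `x^⊥` to the matrix `∇²h + hI` of the
spherical Hessian. -/
def hessOp (n : ℕ) (F : Euc n → ℝ) (x : Euc n) : Euc n →L[ℝ] Euc n :=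
  fderiv ℝ (gradient F) x

/-- `det(∇²h + hI)` at `x ∈ S^{n-1}`: the determinant of the restriction of the Euclidean
Hessian of the 1-homogeneous extension to `x^⊥`, computed as the determinant of
`Hess F + x ⊗ x` on all of `ℝⁿ` (the Hessian of a 1-homogeneous function kills `x`). -/
def sphDet (n : ℕ) (F : Euc n → ℝ) (x : Euc n) : ℝ :=
  LinearMap.det
    ((hessOp n F x + (innerSL ℝ x).smulRight x : Euc n →L[ℝ] Euc n) : Euc n →ₗ[ℝ] Euc n)

/-- `F` is the (1-homogeneously extended) support function of a smooth strictly convex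
body with the origin in its interior: it is smooth away from the origin, positively
1-homogeneous, positive, and `∇²h + hI` is positive definite on each tangent space. -/
structure IsSupportFn (n : ℕ) (F : Euc n → ℝ) : Prop where
  smooth : ContDiffOn ℝ (⊤ : ℕ∞) F {(0 : Euc n)}ᶜ
  homog : ∀ c : ℝ, 0 < c → ∀ x : Euc n, F (c • x) = c * F x
  pos : ∀ x ∈ USphere n, 0 < F x
  posdef : ∀ x ∈ USphere n, ∀ v : Euc n, v ≠ 0 → ⟪x, v⟫ = 0 →
    0 < ⟪v, hessOp n F x v⟫

/-- The convex body determined by the support function `F`. -/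
def bodyOf (n : ℕ) (F : Euc n → ℝ) : Set (Euc n) :=
  {y | ∀ x ∈ USphere n, ⟪x, y⟫ ≤ F x}

/-- The radial function of the convex body with support function `F`. -/
def radialFn (n : ℕ) (F : Euc n → ℝ) (u : Euc n) : ℝ :=
  sSup {r : ℝ | 0 < r ∧ r • u ∈ bodyOf n F}

/-- The normalization factor `η` of the flow. -/
def flowEta (n : ℕ) (f : Euc n → ℝ) (φ : ℝ → ℝ) (h : Euc n → ℝ) : ℝ :=
  sphArea n / sphInt n (fun x => f x / φ (1 / h x))

/-- `H : ℝ → Euc n → ℝ` is (the family of support functions of) a smooth, origin-symmetric,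
strictly convex solution of the flow on the time interval `J`. -/
structure IsFlowSol (n : ℕ) (f : Euc n → ℝ) (φ : ℝ → ℝ) (J : Set ℝ)
    (H : ℝ → Euc n → ℝ) : Prop where
  smooth : ContDiffOn ℝ (⊤ : ℕ∞) (fun p : ℝ × Euc n => H p.1 p.2) (J ×ˢ {(0 : Euc n)}ᶜ)
  body : ∀ t ∈ J, IsSupportFn n (H t)
  symm : ∀ t ∈ J, ∀ x : Euc n, H t (-x) = H t x
  eqn : ∀ t ∈ J, ∀ x ∈ USphere n,
    HasDerivWithinAt (fun s => H s x)
      (H t x - flowEta n f φ (H t) * f x * radTerm n (H t) x ^ n /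
        (φ (1 / H t x) * sphDet n (H t) x)) J t

/-- Condition (i) of the Orlicz-Aleksandrov flow theorem. -/
def CondI (n : ℕ) (f : Euc n → ℝ) (φ : ℝ → ℝ) (h₀ : Euc n → ℝ) : Prop :=
  ∃ R : ℝ → ℝ, (∀ s ∈ Ioi (0 : ℝ), 0 < R s) ∧ StrictMonoOn R (Ioi 0) ∧
    Tendsto R (𝓝[>] (0 : ℝ)) (𝓝 0) ∧ Tendsto R atTop atTop ∧
    (∀ s ∈ Ioi (0 : ℝ), IntegrableOn (fun t => 1 / (t * φ t)) (Ioo 0 s) ∧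
      R s = ∫ t in Ioo (0 : ℝ) s, 1 / (t * φ t)) ∧
    (∀ s ∈ Ioi (0 : ℝ), HasDerivAt R (1 / (s * φ s)) s ∧ 1 / (s * φ s) ≠ 0) ∧
    ∃ Chat : ℝ, 0 < Chat ∧
      (∀ θ ∈ USphere n,
        sphInt n (fun x => f x * R (1 / |⟪x, θ⟫|)) ≤ Chat) ∧
      Chat < sphInt n (fun x => f x * R (1 / h₀ x))

/-- Condition (ii) of the Orlicz-Aleksandrov flow theorem. -/
def CondII (φ : ℝ → ℝ) : Prop :=
  ∃ R : ℝ → ℝ, (∀ s ∈ Ioi (0 : ℝ), 0 < R s) ∧ StrictAntiOn R (Ioi 0) ∧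
    Tendsto R (𝓝[>] (0 : ℝ)) atTop ∧ Tendsto R atTop (𝓝 0) ∧
    (∀ s ∈ Ioi (0 : ℝ), IntegrableOn (fun t => 1 / (t * φ t)) (Ioi s) ∧
      R s = ∫ t in Ioi s, 1 / (t * φ t)) ∧
    (∀ s ∈ Ioi (0 : ℝ), HasDerivAt R (-(1 / (s * φ s))) s ∧ 1 / (s * φ s) ≠ 0)

/-! ### Calculus of support functions -/

namespace IsSupportFn

variable {n : ℕ} {F : Euc n → ℝ}

theorem contDiffAt (hF : IsSupportFn n F) {x : Euc n} (hx : x ≠ 0) :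
    ContDiffAt ℝ (⊤ : ℕ∞) F x :=
  hF.smooth.contDiffAt (isOpen_compl_singleton.mem_nhds hx)

theorem differentiableAt (hF : IsSupportFn n F) {x : Euc n} (hx : x ≠ 0) :
    DifferentiableAt ℝ F x :=
  (hF.contDiffAt hx).differentiableAt (by simp)

theorem continuousAt (hF : IsSupportFn n F) {x : Euc n} (hx : x ≠ 0) :
    ContinuousAt F x :=
  (hF.contDiffAt hx).continuousAt

theorem contDiffAt_gradient (hF : IsSupportFn n F) {x : Euc n} (hx : x ≠ 0) :
    ContDiffAt ℝ (⊤ : ℕ∞) (gradient F) x := by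
  have h1 : ContDiffAt ℝ (⊤ : ℕ∞) (fderiv ℝ F) x :=
    (hF.contDiffAt hx).fderiv_right (by simp)
  exact (InnerProductSpace.toDual ℝ (Euc n)).symm.toContinuousLinearEquiv.contDiff.contDiffAt.comp
    x h1

theorem hasFDerivAt_gradient (hF : IsSupportFn n F) {x : Euc n} (hx : x ≠ 0) :
    HasFDerivAt (gradient F) (hessOp n F x) x :=
  ((hF.contDiffAt_gradient hx).differentiableAt (by simp)).hasFDerivAt

theorem continuousAt_hessOp (hF : IsSupportFn n F) {x : Euc n} (hx : x ≠ 0) :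
    ContinuousAt (hessOp n F) x :=
  ((hF.contDiffAt_gradient hx).fderiv_right (m := (⊤ : ℕ∞)) (by simp)).continuousAt

theorem hasDerivAt_comp (hF : IsSupportFn n F) {γ : ℝ → Euc n} {γ' : Euc n} {t : ℝ}
    (hγ : HasDerivAt γ γ' t) (h0 : γ t ≠ 0) :
    HasDerivAt (fun s => F (γ s)) ⟪gradient F (γ t), γ'⟫ t := by
  rw [inner_gradient_left]
  exact (hF.differentiableAt h0).hasFDerivAt.comp_hasDerivAt t hγ

theorem gradient_smul (hF : IsSupportFn n F) {c : ℝ} (hc : 0 < c) {x : Euc n} (hx : x ≠ 0) :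
    gradient F (c • x) = gradient F x := by
  refine ext_inner_right ℝ fun v => ?_
  have hcx : c • x ≠ 0 := smul_ne_zero hc.ne' hx
  have hl : HasDerivAt (fun s : ℝ => x + s • v) v 0 := by
    simpa using ((hasDerivAt_id (0 : ℝ)).smul_const v).const_add x
  have h1 := hF.hasDerivAt_comp (hl.const_smul c) (by simpa using hcx)
  have h2 := (hF.hasDerivAt_comp hl (by simpa using hx)).const_mul c
  have h3 : (fun s : ℝ => F ((c • fun s : ℝ => x + s • v) s)) = fun s => c * F (x + s • v) := by
    funext s
    exact hF.homog c hc _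
  rw [h3] at h1
  have := h1.unique h2
  simp only [zero_smul, add_zero, inner_smul_right, Pi.smul_apply] at this
  exact mul_left_cancel₀ hc.ne' this

/-- Euler's identity for the 1-homogeneous function `F`. -/
theorem inner_gradient_self (hF : IsSupportFn n F) {x : Euc n} (hx : x ≠ 0) :
    ⟪gradient F x, x⟫ = F x := by
  have hl : HasDerivAt (fun s : ℝ => s • x) x 1 := by
    simpa using (hasDerivAt_id (1 : ℝ)).smul_const x
  have h1 := hF.hasDerivAt_comp hl (by simpa using hx)
  have h2 : HasDerivAt (fun s : ℝ => s * F x) (F x) 1 := by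
    simpa using (hasDerivAt_id (1 : ℝ)).mul_const (F x)
  have h3 : (fun s : ℝ => F (s • x)) =ᶠ[𝓝 1] fun s => s * F x := by
    filter_upwards [Ioi_mem_nhds (zero_lt_one' ℝ)] with s hs using hF.homog s hs x
  simpa using h1.unique (h2.congr_of_eventuallyEq h3)

theorem hessOp_self (hF : IsSupportFn n F) {x : Euc n} (hx : x ≠ 0) :
    hessOp n F x x = 0 := by
  have hl : HasDerivAt (fun s : ℝ => s • x) x 1 := by
    simpa using (hasDerivAt_id (1 : ℝ)).smul_const x
  have h0 : HasFDerivAt (gradient F) (hessOp n F x) ((1 : ℝ) • x) := by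
    simpa using hF.hasFDerivAt_gradient hx
  have h1 := h0.comp_hasDerivAt 1 hl
  have h3 : (gradient F ∘ fun s : ℝ => s • x) =ᶠ[𝓝 1] fun _ => gradient F x := by
    filter_upwards [Ioi_mem_nhds (zero_lt_one' ℝ)] with s hs using hF.gradient_smul hs hx
  exact h1.unique ((hasDerivAt_const _ _).congr_of_eventuallyEq h3)

theorem inner_hessOp (hF : IsSupportFn n F) {x : Euc n} (hx : x ≠ 0) (v : Euc n) :
    ⟪x, hessOp n F x v⟫ = 0 := by
  have h1 := (hF.hasFDerivAt_gradient hx).inner ℝ (hasFDerivAt_id x)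
  have h3 : (fun y => ⟪gradient F y, y⟫) =ᶠ[𝓝 x] F := by
    filter_upwards [isOpen_compl_singleton.mem_nhds hx] with y hy using hF.inner_gradient_self hy
  have h2 := (hF.differentiableAt hx).hasFDerivAt.congr_of_eventuallyEq h3
  have h4 := congrArg (fun L : Euc n →L[ℝ] ℝ => L v) (h1.unique h2)
  simp [fderivInnerCLM_apply, ← inner_gradient_left] at h4
  rwa [real_inner_comm]

theorem hessOp_smul (hF : IsSupportFn n F) {c : ℝ} (hc : 0 < c) {x : Euc n} (hx : x ≠ 0) :
    c • hessOp n F (c • x) = hessOp n F x := by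
  have hcx : c • x ≠ 0 := smul_ne_zero hc.ne' hx
  have h1 := (hF.hasFDerivAt_gradient hcx).comp x ((hasFDerivAt_id x).const_smul c)
  have h3 : (gradient F ∘ fun y => c • y) =ᶠ[𝓝 x] gradient F := by
    filter_upwards [isOpen_compl_singleton.mem_nhds hx] with y hy using hF.gradient_smul hc hy
  have h2 := (hF.hasFDerivAt_gradient hx).congr_of_eventuallyEq h3
  have := h1.unique h2
  rw [← this]
  ext v
  simp

theorem pos_of_ne_zero (hF : IsSupportFn n F) {x : Euc n} (hx : x ≠ 0) : 0 < F x := by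
  have hnx : 0 < ‖x‖ := norm_pos_iff.2 hx
  have h := hF.homog ‖x‖ hnx (‖x‖⁻¹ • x)
  rw [smul_smul, mul_inv_cancel₀ hnx.ne', one_smul] at h
  rw [h]
  refine mul_pos hnx (hF.pos _ ?_)
  simp [norm_smul, hnx.ne']

theorem gradient_ne_zero (hF : IsSupportFn n F) {x : Euc n} (hx : x ≠ 0) :
    gradient F x ≠ 0 := by
  intro h
  have h1 := hF.inner_gradient_self hx
  rw [h, inner_zero_left] at h1
  exact (hF.pos_of_ne_zero hx).ne h1

/-- The Hessian of `F` at `z` is positive definite transversally to the line through `z`. -/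
theorem hessOp_pos (hF : IsSupportFn n F) {z v : Euc n} (hz : z ≠ 0)
    (hv : ∀ c : ℝ, v ≠ c • z) : 0 < ⟪v, hessOp n F z v⟫ := by
  have hnz : 0 < ‖z‖ := norm_pos_iff.2 hz
  set c : ℝ := ⟪z, v⟫ / ‖z‖ ^ 2 with hc
  set w : Euc n := v - c • z with hw
  have hw0 : w ≠ 0 := sub_ne_zero.2 (hv c)
  have hzw : ⟪z, w⟫ = 0 := by
    rw [hw, inner_sub_right, inner_smul_right, real_inner_self_eq_norm_sq, hc]
    field_simp
    ring
  have hvw : v = w + c • z := by simp [hw]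
  have h1 : ⟪v, hessOp n F z v⟫ = ⟪w, hessOp n F z w⟫ := by
    have : hessOp n F z v = hessOp n F z w := by
      rw [hvw, map_add, map_smul, hF.hessOp_self hz, smul_zero, add_zero]
    rw [this]
    conv_lhs => rw [hvw]
    rw [inner_add_left, inner_smul_left, hF.inner_hessOp hz]
    simp
  rw [h1]
  have h2 := hF.hessOp_smul (inv_pos.2 hnz) hz
  rw [← h2]
  simp only [_root_.smul_apply, inner_smul_right]
  refine mul_pos (inv_pos.2 hnz) (hF.posdef _ ?_ w hw0 ?_)
  · simp [norm_smul, hnz.ne']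
  · rw [inner_smul_left, hzw, mul_zero]

/-- Strict convexity: the support point `∇F(x)` of the body in direction `x` lies strictly inside
the half-space `⟨y, ·⟩ < F(y)` for every other direction `y`. -/
theorem inner_gradient_lt (hF : IsSupportFn n F) {x y : Euc n} (hx : x ∈ USphere n)
    (hy : y ∈ USphere n) (hxy : x ≠ y) : ⟪gradient F x, y⟫ < F y := by
  have hnx : ‖x‖ = 1 := by simpa using hx
  have hny : ‖y‖ = 1 := by simpa using hy
  have hx0 : x ≠ 0 := by rintro rfl; simp at hnx
  have hy0 : y ≠ 0 := by rintro rfl; simp at hny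
  by_cases hneg : y = -x
  · have := hF.pos_of_ne_zero hx0
    have h2 := hF.pos_of_ne_zero hy0
    rw [hneg, inner_neg_right, hF.inner_gradient_self hx0, ← hneg]
    linarith
  have hlin : ∀ a b : ℝ, a • x + b • y = 0 → a = 0 ∧ b = 0 := by
    intro a b hab
    have h1 : a • x = -(b • y) := eq_neg_of_add_eq_zero_left hab
    have h2 : |a| = |b| := by
      have := congrArg norm h1
      simpa [norm_smul, hnx, hny] using this
    rcases abs_eq_abs.1 h2 with h | h
    · subst h
      rw [← smul_add] at hab
      rcases smul_eq_zero.1 hab with h | h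
      · exact ⟨h, h⟩
      · exact absurd (eq_neg_of_add_eq_zero_right h) hneg
    · subst h
      have : b • (y - x) = 0 := by rw [smul_sub, ← hab]; module
      rcases smul_eq_zero.1 this with h | h
      · simp [h]
      · exact absurd (sub_eq_zero.1 h).symm hxy
  set γ : ℝ → Euc n := fun t => x + t • (y - x) with hγ
  have hγ0 : ∀ t, γ t ≠ 0 := by
    intro t ht
    have := hlin (1 - t) t (by rw [← ht, hγ]; module)
    linarith [this.1, this.2]
  have hγd : ∀ t, HasDerivAt γ (y - x) t := fun t => by
    simpa [hγ] using ((hasDerivAt_id t).smul_const (y - x)).const_add x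
  have hk1 : ∀ t, HasDerivAt (fun s => F (γ s)) ⟪gradient F (γ t), y - x⟫ t := fun t =>
    hF.hasDerivAt_comp (hγd t) (hγ0 t)
  have hk2 : ∀ t, HasDerivAt (fun s => ⟪gradient F (γ s), y - x⟫)
      ⟪hessOp n F (γ t) (y - x), y - x⟫ t := fun t => by
    have h1 := (hF.hasFDerivAt_gradient (hγ0 t)).comp_hasDerivAt t (hγd t)
    simpa using h1.inner ℝ (hasDerivAt_const t (y - x))
  have hmono : StrictMono (fun s => ⟪gradient F (γ s), y - x⟫) := by
    refine strictMono_of_deriv_pos fun t => ?_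
    rw [(hk2 t).deriv, real_inner_comm]
    refine hF.hessOp_pos (hγ0 t) fun c hc => ?_
    have := hlin (-1 - c * (1 - t)) (1 - c * t) (by
      have : y - x - c • γ t = 0 := sub_eq_zero.2 hc
      rw [← this, hγ]; module)
    have h3 : c = 0 := by linarith [this.1, this.2]
    have := this.2
    rw [h3] at this
    simp at this
  obtain ⟨ξ, hξ, hξ'⟩ := exists_hasDerivAt_eq_slope (fun s => F (γ s))
    (fun t => ⟪gradient F (γ t), y - x⟫) zero_lt_one
    (fun t _ => (hk1 t).continuousAt.continuousWithinAt) (fun t _ => hk1 t)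
  have h0 := hmono hξ.1
  simp only [hξ'] at h0
  simp only [hγ, inner_sub_right, zero_smul, add_zero, hF.inner_gradient_self hx0, one_smul,
    add_sub_cancel, sub_zero, div_one] at h0
  linarith

theorem inner_gradient_le (hF : IsSupportFn n F) {x y : Euc n} (hx : x ∈ USphere n)
    (hy : y ∈ USphere n) : ⟪gradient F x, y⟫ ≤ F y := by
  by_cases h : x = y
  · subst h
    have : x ≠ 0 := by rintro rfl; simp at hx
    exact (hF.inner_gradient_self this).le
  · exact (hF.inner_gradient_lt hx hy h).le

/-- The Gauss map direction determines the normal. -/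
theorem eq_of_gradient_eq_smul (hF : IsSupportFn n F) {x y : Euc n} (hx : x ∈ USphere n)
    (hy : y ∈ USphere n) {c : ℝ} (hc : 0 < c) (h : gradient F x = c • gradient F y) : x = y := by
  by_contra hxy
  have hx0 : x ≠ 0 := by rintro rfl; simp at hx
  have hy0 : y ≠ 0 := by rintro rfl; simp at hy
  have h1 := hF.inner_gradient_lt hx hy hxy
  have h2 := hF.inner_gradient_lt hy hx (Ne.symm hxy)
  have h3 : gradient F y = c⁻¹ • gradient F x := by
    rw [h, smul_smul, inv_mul_cancel₀ hc.ne', one_smul]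
  rw [h, inner_smul_left, hF.inner_gradient_self hy0] at h1
  rw [h3, inner_smul_left, hF.inner_gradient_self hx0] at h2
  simp at h1 h2
  have p1 := hF.pos_of_ne_zero hx0
  have p2 := hF.pos_of_ne_zero hy0
  have c1 : c < 1 := by nlinarith
  have c2 : c⁻¹ < 1 := by nlinarith
  have := mul_inv_cancel₀ hc.ne'
  nlinarith [inv_pos.2 hc]

/-- Every direction is attained: maximise `⟨x, u⟩ / F(x)` over the unit sphere; the gradient
of `⟨·, u⟩ - m F` vanishes at the maximiser, where `m` is the maximal value. -/
theorem exists_gradient_eq_smul (hF : IsSupportFn n F) {u : Euc n} (hu : u ∈ USphere n) :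
    ∃ x ∈ USphere n, ∃ m : ℝ, 0 < m ∧ u = m • gradient F x := by
  have hnz : ∀ x ∈ USphere n, x ≠ 0 := by rintro x hx rfl; simp at hx
  have hcont : ContinuousOn (fun x => ⟪x, u⟫ / F x) (USphere n) := by
    intro x hx
    refine ContinuousAt.continuousWithinAt ?_
    exact (by fun_prop : ContinuousAt (fun x => ⟪x, u⟫) x).div (hF.continuousAt (hnz x hx))
      (hF.pos x hx).ne'
  obtain ⟨x, hx, hmax⟩ := (isCompact_sphere (0 : Euc n) 1).exists_isMaxOn ⟨u, hu⟩ hcont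
  set m : ℝ := ⟪x, u⟫ / F x with hm
  have hnu : ‖u‖ = 1 := by simpa using hu
  have hm0 : 0 < m := by
    refine lt_of_lt_of_le ?_ (hmax hu)
    have := hF.pos u hu
    simp only [real_inner_self_eq_norm_sq, hnu]
    positivity
  refine ⟨x, hx, m, hm0, ?_⟩
  have hle : ∀ y : Euc n, y ≠ 0 → ⟪y, u⟫ - m * F y ≤ 0 := by
    intro y hy
    have hny : 0 < ‖y‖ := norm_pos_iff.2 hy
    have hys : ‖y‖⁻¹ • y ∈ USphere n := by simp [norm_smul, hny.ne']
    have h1 : ⟪‖y‖⁻¹ • y, u⟫ / F (‖y‖⁻¹ • y) ≤ m := hmax hys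
    rw [hF.homog _ (inv_pos.2 hny), inner_smul_left] at h1
    simp only [conj_trivial] at h1
    rw [mul_div_mul_left _ _ (inv_pos.2 hny).ne', div_le_iff₀ (hF.pos_of_ne_zero hy)] at h1
    linarith
  have hx0 := hnz x hx
  have heq : ⟪x, u⟫ - m * F x = 0 := by
    rw [hm, div_mul_cancel₀ _ (hF.pos x hx).ne', sub_self]
  have hloc : IsLocalMax (fun y => ⟪y, u⟫ - m * F y) x := by
    filter_upwards [isOpen_compl_singleton.mem_nhds hx0] with y hy
    rw [heq]
    exact hle y hy
  have hd : HasFDerivAt (fun y => ⟪y, u⟫ - m * F y)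
      (((fderivInnerCLM ℝ (x, u)).comp ((ContinuousLinearMap.id ℝ (Euc n)).prod 0))
        - m • fderiv ℝ F x) x :=
    ((hasFDerivAt_id x).inner ℝ (hasFDerivAt_const u x)).sub
      ((hF.differentiableAt hx0).hasFDerivAt.const_mul m)
  have h0 := hloc.hasFDerivAt_eq_zero hd
  refine ext_inner_left ℝ fun v => ?_
  have := congrArg (fun L : Euc n →L[ℝ] ℝ => L v) h0
  simp [fderivInnerCLM_apply, ← inner_gradient_left] at this
  rw [inner_smul_right, real_inner_comm (gradient F x) v]
  linarith

/-- `√(|∇h|² + h²)` is the norm of the Euclidean gradient of the 1-homogeneous extension. -/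
theorem radTerm_eq (hF : IsSupportFn n F) {x : Euc n} (hx : x ∈ USphere n) :
    radTerm n F x = ‖gradient F x‖ := by
  have hnx : ‖x‖ = 1 := by simpa using hx
  have hx0 : x ≠ 0 := by rintro rfl; simp at hnx
  rw [radTerm, sphGrad, norm_sub_sq_real, inner_smul_right, norm_smul, hnx,
    hF.inner_gradient_self hx0, mul_one, Real.norm_eq_abs, sq_abs]
  rw [show ‖gradient F x‖ ^ 2 - 2 * (F x * F x) + F x ^ 2 + F x ^ 2 = ‖gradient F x‖ ^ 2 by ring]
  exact Real.sqrt_sq (norm_nonneg _)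

end IsSupportFn

/-! ### The norm-preserving extension of the Gauss map -/

/-- The 1-homogeneous, norm-preserving extension to `ℝⁿ ∖ {0}` of the map of the unit sphere that
sends an outer normal `x` to the direction `∇F(x) / ‖∇F(x)‖` of its support point. -/
def gaussExt (n : ℕ) (F : Euc n → ℝ) (x : Euc n) : Euc n :=
  Real.sqrt (⟪x, x⟫ / ⟪gradient F x, gradient F x⟫) • gradient F x

/-- The density `h det(∇²h + hI) / (|∇h|² + h²)^{n/2}` of the pulled-back spherical measure. -/
def gaussJac (n : ℕ) (F : Euc n → ℝ) (x : Euc n) : ℝ :=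
  F x * sphDet n F x / radTerm n F x ^ n

theorem gaussExt_eq (n : ℕ) (F : Euc n → ℝ) (x : Euc n) :
    gaussExt n F x = (‖x‖ / ‖gradient F x‖) • gradient F x := by
  rw [gaussExt, real_inner_self_eq_norm_sq, real_inner_self_eq_norm_sq, ← div_pow,
    Real.sqrt_sq (by positivity)]

namespace IsSupportFn

variable {n : ℕ} {F : Euc n → ℝ}

theorem norm_gaussExt (hF : IsSupportFn n F) {x : Euc n} (hx : x ≠ 0) :
    ‖gaussExt n F x‖ = ‖x‖ := by
  have := norm_ne_zero_iff.2 (hF.gradient_ne_zero hx)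
  rw [gaussExt_eq, norm_smul]
  simp [this]

theorem gaussExt_smul (hF : IsSupportFn n F) {c : ℝ} (hc : 0 < c) {x : Euc n} (hx : x ≠ 0) :
    gaussExt n F (c • x) = c • gaussExt n F x := by
  rw [gaussExt_eq, gaussExt_eq, hF.gradient_smul hc hx, norm_smul, Real.norm_of_nonneg hc.le,
    smul_smul, mul_div_assoc]

theorem differentiableAt_gaussExt (hF : IsSupportFn n F) {x : Euc n} (hx : x ≠ 0) :
    DifferentiableAt ℝ (gaussExt n F) x := by
  have h1 : DifferentiableAt ℝ (gradient F) x := (hF.hasFDerivAt_gradient hx).differentiableAt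
  have h2 : ⟪gradient F x, gradient F x⟫ ≠ 0 := inner_self_ne_zero.2 (hF.gradient_ne_zero hx)
  have h3 : ⟪x, x⟫ ≠ 0 := inner_self_ne_zero.2 hx
  have h4 : DifferentiableAt ℝ (fun y : Euc n => ⟪y, y⟫) x :=
    differentiableAt_id.inner ℝ differentiableAt_id
  have h5 : DifferentiableAt ℝ (fun y : Euc n => ⟪gradient F y, gradient F y⟫) x :=
    h1.inner ℝ h1
  have h6 : DifferentiableAt ℝ (fun y : Euc n => ⟪y, y⟫ / ⟪gradient F y, gradient F y⟫) x := by
    simp only [div_eq_mul_inv]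
    exact h4.fun_mul (h5.fun_inv h2)
  exact (h6.sqrt (div_ne_zero h3 h2)).fun_smul h1

theorem fderiv_gaussExt_smul (hF : IsSupportFn n F) {c : ℝ} (hc : 0 < c) {x : Euc n}
    (hx : x ≠ 0) : fderiv ℝ (gaussExt n F) (c • x) = fderiv ℝ (gaussExt n F) x := by
  have hcx : c • x ≠ 0 := smul_ne_zero hc.ne' hx
  have h1 := (hF.differentiableAt_gaussExt hcx).hasFDerivAt.comp x
    ((hasFDerivAt_id x).const_smul c)
  have h3 : (gaussExt n F ∘ fun y => c • y) =ᶠ[𝓝 x] fun y => c • gaussExt n F y := by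
    filter_upwards [isOpen_compl_singleton.mem_nhds hx] with y hy using hF.gaussExt_smul hc hy
  have h2 := ((hF.differentiableAt_gaussExt hx).hasFDerivAt.const_smul c).congr_of_eventuallyEq h3
  have := h1.unique h2
  ext1 v
  have := congrArg (fun L : Euc n →L[ℝ] Euc n => L v) this
  simp only [ContinuousLinearMap.comp_apply, _root_.smul_apply, map_smul,
    ContinuousLinearMap.id_apply] at this
  exact smul_right_injective _ hc.ne' this

theorem fderiv_gaussExt_apply (hF : IsSupportFn n F) {x : Euc n} (hx : x ∈ USphere n)
    (v : Euc n) :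
    fderiv ℝ (gaussExt n F) x v = ‖gradient F x‖⁻¹ • hessOp n F x v +
      (⟪x, v⟫ * ‖gradient F x‖⁻¹ - ⟪gradient F x, hessOp n F x v⟫ * ‖gradient F x‖⁻¹ ^ 3) •
        gradient F x := by
  have hnx : ‖x‖ = 1 := by simpa using hx
  have hx0 : x ≠ 0 := by rintro rfl; simp at hnx
  have hl : HasDerivAt (fun s : ℝ => x + s • v) v 0 := by
    simpa using ((hasDerivAt_id (0 : ℝ)).smul_const v).const_add x
  have hx0' : x = x + (0 : ℝ) • v := by simp
  have hG : HasDerivAt (fun s : ℝ => gradient F (x + s • v)) (hessOp n F x v) 0 := by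
    have h := hF.hasFDerivAt_gradient hx0
    have h' : HasFDerivAt (gradient F) (hessOp n F x) (x + (0 : ℝ) • v) := by rwa [← hx0']
    exact h'.comp_hasDerivAt 0 hl
  have hρ : 0 < ‖gradient F x‖ := norm_pos_iff.2 (hF.gradient_ne_zero hx0)
  have hS : HasDerivAt (fun s : ℝ => gaussExt n F (x + s • v)) (fderiv ℝ (gaussExt n F) x v) 0 := by
    have h := (hF.differentiableAt_gaussExt hx0).hasFDerivAt
    have h' : HasFDerivAt (gaussExt n F) (fderiv ℝ (gaussExt n F) x) (x + (0 : ℝ) • v) := by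
      rwa [← hx0']
    exact h'.comp_hasDerivAt 0 hl
  have h2 : ⟪gradient F (x + (0 : ℝ) • v), gradient F (x + (0 : ℝ) • v)⟫ ≠ 0 := by
    rw [← hx0']
    exact inner_self_ne_zero.2 (hF.gradient_ne_zero hx0)
  have h3 : ⟪x + (0 : ℝ) • v, x + (0 : ℝ) • v⟫ ≠ 0 := by
    rw [← hx0']
    exact inner_self_ne_zero.2 hx0
  have hS' := (((hl.inner ℝ hl).fun_div (hG.inner ℝ hG) h2).sqrt (div_ne_zero h3 h2)).fun_smul hG
  have := hS.unique hS'
  rw [this]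
  simp only [zero_smul, add_zero, real_inner_self_eq_norm_sq, hnx]
  rw [← div_pow, Real.sqrt_sq (by positivity), real_inner_comm x v,
    real_inner_comm (gradient F x) (hessOp n F x v)]
  congr 1
  · simp
  · congr 1
    field_simp
    ring

/-- The Jacobian of the extended Gauss map on the unit sphere: the derivative factors as a
product of the operator `Hess F + x ⊗ x` with three explicit operators, each of them a scalar
multiple of a rank-one perturbation of the identity. -/
theorem det_fderiv_gaussExt (hF : IsSupportFn n F) {x : Euc n} (hx : x ∈ USphere n) :
    (fderiv ℝ (gaussExt n F) x).det = gaussJac n F x := by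
  have hnx : ‖x‖ = 1 := by simpa using hx
  have hx0 : x ≠ 0 := by rintro rfl; simp at hnx
  have hxx : ⟪x, x⟫ = 1 := by rw [real_inner_self_eq_norm_sq, hnx, one_pow]
  set G := gradient F x with hG
  set ρ := ‖G‖ with hρdef
  have hρ : 0 < ρ := norm_pos_iff.2 (hF.gradient_ne_zero hx0)
  set N : Euc n := ρ⁻¹ • G with hN
  let f : Euc n →ₗ[ℝ] ℝ := (innerSL ℝ x : Euc n →L[ℝ] ℝ)
  let g : Euc n →ₗ[ℝ] ℝ := (innerSL ℝ N : Euc n →L[ℝ] ℝ)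
  have hf : ∀ v, f v = ⟪x, v⟫ := fun v => rfl
  have hg : ∀ v, g v = ⟪N, v⟫ := fun v => rfl
  -- `P = I + (N - x) ⊗ x`, `U = I + x ⊗ (⟨N, x⟩ x - N)`, and `D` is `ρ⁻¹` on `x^⊥`, `1` on `ℝ x`.
  let P := LinearMap.transvection f (N - x)
  let U := LinearMap.transvection (⟪N, x⟫ • f - g) x
  let D := ρ⁻¹ • LinearMap.transvection ((ρ - 1) • f) x
  let M : Euc n →ₗ[ℝ] Euc n :=
    ((hessOp n F x + (innerSL ℝ x).smulRight x : Euc n →L[ℝ] Euc n) : Euc n →ₗ[ℝ] Euc n)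
  have hM : ∀ v, M v = hessOp n F x v + ⟪x, v⟫ • x := fun v => rfl
  have key : ((fderiv ℝ (gaussExt n F) x : Euc n →L[ℝ] Euc n) : Euc n →ₗ[ℝ] Euc n) =
      P ∘ₗ U ∘ₗ D ∘ₗ M := by
    refine LinearMap.ext fun v => ?_
    have hA := hF.inner_hessOp hx0 v
    rw [ContinuousLinearMap.coe_coe, hF.fderiv_gaussExt_apply hx]
    set a := hessOp n F x v with ha
    set β := ⟪x, v⟫ with hβ
    have e1 : D (M v) = ρ⁻¹ • a + β • x := by
      simp only [D, LinearMap.smul_apply, LinearMap.transvection.apply, hf, hM, inner_add_right,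
        inner_smul_right, hxx, hA, ← ha, ← hβ, smul_eq_mul]
      rw [show a + β • x + ((ρ - 1) * (0 + β * 1)) • x = a + (ρ * β) • x by module, smul_add,
        smul_smul, ← mul_assoc, inv_mul_cancel₀ hρ.ne', one_mul]
    have e2 : U (D (M v)) = ρ⁻¹ • a + (β - ρ⁻¹ * ⟪N, a⟫) • x := by
      rw [e1]
      simp only [U, LinearMap.smul_apply, LinearMap.sub_apply, LinearMap.transvection.apply, hf, hg,
        inner_add_right, inner_smul_right, hxx, hA, smul_eq_mul]
      module
    rw [LinearMap.comp_apply, LinearMap.comp_apply, LinearMap.comp_apply, e2]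
    simp only [P, LinearMap.transvection.apply, hf, inner_add_right, inner_smul_right, hxx, hA]
    rw [hN, inner_smul_left]
    simp only [conj_trivial]
    module
  have hdetP : LinearMap.det P = ρ⁻¹ * F x := by
    rw [LinearMap.transvection.det, hf, inner_sub_right, hxx, hN, inner_smul_right,
      real_inner_comm, hF.inner_gradient_self hx0]
    ring
  have hdetU : LinearMap.det U = 1 := by
    rw [LinearMap.transvection.det]
    simp [hf, hg, hnx]
  have hdetD : LinearMap.det D = ρ⁻¹ ^ n * ρ := by
    rw [LinearMap.det_smul, LinearMap.transvection.det]
    simp [hf, hnx]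
  have hdetM : LinearMap.det M = sphDet n F x := rfl
  rw [ContinuousLinearMap.det, key, LinearMap.det_comp, LinearMap.det_comp, LinearMap.det_comp,
    hdetP, hdetU, hdetD, hdetM, gaussJac, hF.radTerm_eq hx, ← hG, ← hρdef, inv_pow]
  field_simp

/-- `det(∇²h + hI) > 0`, by deforming `Hess F + x ⊗ x` to the identity through operators with
positive definite quadratic form. -/
theorem sphDet_pos (hF : IsSupportFn n F) {x : Euc n} (hx : x ∈ USphere n) :
    0 < sphDet n F x := by
  have hnx : ‖x‖ = 1 := by simpa using hx
  have hx0 : x ≠ 0 := by rintro rfl; simp at hnx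
  have hxx : ⟪x, x⟫ = 1 := by rw [real_inner_self_eq_norm_sq, hnx, one_pow]
  set M : Euc n →L[ℝ] Euc n := hessOp n F x + (innerSL ℝ x).smulRight x with hM
  have hMpos : ∀ v, v ≠ 0 → 0 < ⟪v, M v⟫ := by
    intro v hv
    have e : ⟪v, M v⟫ = ⟪v, hessOp n F x v⟫ + ⟪x, v⟫ ^ 2 := by
      simp [hM, inner_add_right, inner_smul_right, real_inner_comm v x, sq]
    rw [e]
    by_cases h : ∃ c : ℝ, v = c • x
    · obtain ⟨c, rfl⟩ := h
      have hc : c ≠ 0 := by rintro rfl; simp at hv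
      rw [map_smul, hF.hessOp_self hx0, smul_zero, inner_zero_right, inner_smul_right, hxx]
      positivity
    · push Not at h
      have := hF.hessOp_pos hx0 h
      positivity
  let Q : ℝ → Euc n →L[ℝ] Euc n := fun s => s • M + (1 - s) • ContinuousLinearMap.id ℝ (Euc n)
  have hQc : Continuous fun s => (Q s).det :=
    ContinuousLinearMap.continuous_det.comp (by fun_prop)
  have hQ0 : ∀ s ∈ Icc (0 : ℝ) 1, (Q s).det ≠ 0 := by
    intro s hs h0
    have hker : LinearMap.ker (Q s : Euc n →ₗ[ℝ] Euc n) ≠ ⊥ :=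
      (LinearMap.bot_lt_ker_of_det_eq_zero h0).ne'
    obtain ⟨v, hv, hv0⟩ := (Submodule.ne_bot_iff _).1 hker
    have h1 : ⟪v, Q s v⟫ = 0 := by
      have : Q s v = 0 := hv
      rw [this, inner_zero_right]
    have h2 : ⟪v, Q s v⟫ = s * ⟪v, M v⟫ + (1 - s) * ⟪v, v⟫ := by
      simp [Q, inner_add_right, inner_smul_right]
    have h3 := hMpos v hv0
    have h4 : 0 < ⟪v, v⟫ := real_inner_self_pos.2 hv0
    rcases eq_or_lt_of_le hs.1 with h | h
    · rw [h2, ← h] at h1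
      linarith
    · nlinarith [mul_pos h h3, mul_nonneg (sub_nonneg.2 hs.2) h4.le]
  have h1 : (Q 1).det = sphDet n F x := by
    simp [Q, sphDet, ContinuousLinearMap.det, hM]
  have h0 : (Q 0).det = 1 := by
    simp [Q, ContinuousLinearMap.det]
  rw [← h1]
  by_contra hneg
  push Not at hneg
  have := intermediate_value_Icc' (zero_le_one' ℝ) hQc.continuousOn
  obtain ⟨s, hs, hs'⟩ := this ⟨hneg, by rw [h0]; exact zero_le_one⟩
  exact hQ0 s hs hs'

theorem gaussJac_pos (hF : IsSupportFn n F) {x : Euc n} (hx : x ∈ USphere n) :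
    0 < gaussJac n F x := by
  have hx0 : x ≠ 0 := by rintro rfl; simp at hx
  have h1 := hF.pos x hx
  have h2 := hF.sphDet_pos hx
  have h3 : 0 < radTerm n F x := by
    rw [hF.radTerm_eq hx]
    exact norm_pos_iff.2 (hF.gradient_ne_zero hx0)
  rw [gaussJac]
  positivity

theorem continuous_gaussJac (hF : IsSupportFn n F) :
    Continuous fun x : USphere n => gaussJac n F x := by
  refine continuous_iff_continuousAt.2 fun x => ?_
  have hx0 : (x : Euc n) ≠ 0 := by
    intro h
    have := x.2
    rw [h] at this
    simp at this
  have e : (fun x : USphere n => gaussJac n F x) =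
      fun x : USphere n => F x * sphDet n F x / ‖gradient F x‖ ^ n := by
    funext y
    rw [gaussJac, hF.radTerm_eq y.2]
  rw [e]
  have hv : ContinuousAt (fun x : USphere n => (x : Euc n)) x := continuous_subtype_val.continuousAt
  have c1 : ContinuousAt (fun x : USphere n => F x) x := (hF.continuousAt hx0).comp hv
  have c2 : ContinuousAt (fun x : USphere n => gradient F x) x :=
    (hF.contDiffAt_gradient hx0).continuousAt.comp hv
  have c3 : ContinuousAt (fun x : USphere n => hessOp n F x) x :=
    (hF.continuousAt_hessOp hx0).comp hv
  have c4 : ContinuousAt (fun x : USphere n => sphDet n F x) x := by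
    have hc : Continuous fun p : Euc n × (Euc n →L[ℝ] Euc n) =>
        (p.2 + (innerSL ℝ p.1).smulRight p.1 : Euc n →L[ℝ] Euc n).det :=
      ContinuousLinearMap.continuous_det.comp (by fun_prop)
    exact hc.continuousAt.comp (hv.prodMk c3)
  exact (c1.mul c4).div (c2.norm.pow n) (pow_ne_zero _ (norm_ne_zero_iff.2
    (hF.gradient_ne_zero hx0)))

end IsSupportFn

/-! ### Integration on the sphere -/

instance isFiniteMeasure_sphMeasure (n : ℕ) : IsFiniteMeasure (sphMeasure n) := by
  unfold sphMeasure
  infer_instance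

theorem ne_zero_of_mem_USphere {n : ℕ} {x : Euc n} (hx : x ∈ USphere n) : x ≠ 0 := by
  rintro rfl
  simp at hx

theorem norm_inv_smul_mem_USphere {n : ℕ} {y : Euc n} (hy : y ≠ 0) : ‖y‖⁻¹ • y ∈ USphere n := by
  have : ‖y‖ ≠ 0 := norm_ne_zero_iff.2 hy
  simp [norm_smul, this]

/-- The punctured open unit ball, on which spherical integrals are computed as integrals of
0-homogeneous functions. -/
def puncBall (n : ℕ) : Set (Euc n) := ball 0 1 ∩ {(0 : Euc n)}ᶜ

theorem measurableSet_puncBall (n : ℕ) : MeasurableSet (puncBall n) :=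
  measurableSet_ball.inter (measurableSet_singleton _).compl

theorem mem_puncBall {n : ℕ} {y : Euc n} : y ∈ puncBall n ↔ ‖y‖ < 1 ∧ y ≠ 0 := by
  simp [puncBall]

/-- The radial factor `∫₀¹ r^{n-1} dr` of polar integration over the unit ball. -/
def radFactor (n : ℕ) : ℝ := ∫ r : Ioi (0 : ℝ), (Iio (1 : ℝ)).indicator 1 (r : ℝ)
  ∂(Measure.volumeIoiPow (Module.finrank ℝ (Euc n) - 1))

theorem radFactor_eq (n : ℕ) : radFactor n =
    (Measure.volumeIoiPow (Module.finrank ℝ (Euc n) - 1)).real (Iio ⟨1, mem_Ioi.2 one_pos⟩) := by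
  rw [radFactor, ← integral_indicator_one measurableSet_Iio]
  rfl

theorem radFactor_pos (n : ℕ) : 0 < radFactor n := by
  rw [radFactor_eq, Measure.real, Measure.volumeIoiPow_apply_Iio, ENNReal.toReal_ofReal] <;>
    positivity

theorem setIntegral_puncBall (n : ℕ) (P : Euc n → ℝ) :
    ∫ y in puncBall n, P (‖y‖⁻¹ • y) = radFactor n * sphInt n P := by
  have hmp := (volume : Measure (Euc n)).measurePreserving_homeomorphUnitSphereProd
  have h1 := hmp.integral_comp (Homeomorph.measurableEmbedding _)
    (fun p : USphere n × Ioi (0 : ℝ) => P p.1 * (Iio (1 : ℝ)).indicator 1 (p.2 : ℝ))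
  rw [integral_prod_mul (fun x : USphere n => P x)
    (fun r : Ioi (0 : ℝ) => (Iio (1 : ℝ)).indicator 1 (r : ℝ))] at h1
  rw [sphInt, mul_comm, sphMeasure, radFactor, ← h1]
  have h2 := integral_subtype_comap (μ := volume) (measurableSet_singleton (0 : Euc n)).compl
    (fun y => (ball (0 : Euc n) 1).indicator (fun y => P (‖y‖⁻¹ • y)) y)
  rw [puncBall, inter_comm, ← setIntegral_indicator measurableSet_ball, ← h2]
  refine integral_congr_ae (Eventually.of_forall fun y => ?_)
  by_cases hy : ‖(y : Euc n)‖ < 1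
  · simp [indicator, hy]
  · simp [indicator, hy]

/-- A function on the sphere is integrable if its 0-homogeneous extension is so on the ball. -/
theorem integrable_of_integrableOn_puncBall {n : ℕ} {P : Euc n → ℝ}
    (h : IntegrableOn (fun y => P (‖y‖⁻¹ • y)) (puncBall n)) :
    Integrable (fun x : USphere n => P x) (sphMeasure n) := by
  have hmp := (volume : Measure (Euc n)).measurePreserving_homeomorphUnitSphereProd
  set ν := Measure.volumeIoiPow (Module.finrank ℝ (Euc n) - 1)
  set I : Set (Ioi (0 : ℝ)) := Iio ⟨1, mem_Ioi.2 one_pos⟩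
  have hν : ν.restrict I ≠ 0 := by
    intro h0
    have : ν I = 0 := by rw [← Measure.restrict_apply_self, h0]; rfl
    have h1 := radFactor_pos n
    rw [radFactor_eq, Measure.real, this] at h1
    simp at h1
  refine Integrable.of_comp_fst (ν := ν.restrict I) ?_ hν
  have e : (sphMeasure n).prod (ν.restrict I) =
      ((sphMeasure n).prod ν).restrict (univ ×ˢ I) := by
    rw [← Measure.prod_restrict, Measure.restrict_univ]
  have hI : MeasurableSet ((univ : Set (USphere n)) ×ˢ I) :=
    MeasurableSet.univ.prod measurableSet_Iio
  rw [e]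
  change IntegrableOn _ _ _
  rw [← integrable_indicator_iff hI, sphMeasure, ← hmp.integrable_comp_emb
    (Homeomorph.measurableEmbedding _)]
  have h2 : IntegrableOn ((ball (0 : Euc n) 1).indicator fun y => P (‖y‖⁻¹ • y))
      {(0 : Euc n)}ᶜ := by
    rw [integrableOn_indicator_iff measurableSet_ball]
    exact h
  rw [integrableOn_iff_comap_subtypeVal (measurableSet_singleton (0 : Euc n)).compl] at h2
  refine h2.congr (Eventually.of_forall fun y => ?_)
  by_cases hy : ‖(y : Euc n)‖ < 1
  · have : (homeomorphUnitSphereProd (Euc n) y).2 ∈ I := by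
      simpa [I, ← Subtype.coe_lt_coe] using hy
    simp [indicator, hy, this]
  · have : (homeomorphUnitSphereProd (Euc n) y).2 ∉ I := by
      simpa [I, ← Subtype.coe_lt_coe] using hy
    simp [indicator, hy, this]

theorem sphInt_comp_isometry (n : ℕ) (P : Euc n → ℝ) (A : Euc n ≃ₗᵢ[ℝ] Euc n) :
    sphInt n (fun x => P (A x)) = sphInt n P := by
  have h1 := setIntegral_puncBall n P
  have h2 := setIntegral_puncBall n fun x => P (A x)
  have h3 := A.measurePreserving.setIntegral_preimage_emb A.toHomeomorph.measurableEmbedding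
    (fun y => P (‖y‖⁻¹ • y)) (puncBall n)
  have h4 : A ⁻¹' puncBall n = puncBall n := by
    ext y
    simp [mem_puncBall]
  rw [h4] at h3
  simp only [A.norm_map, ← map_smul] at h3
  rw [h1, h2] at h3
  exact mul_left_cancel₀ (radFactor_pos n).ne' h3

namespace IsSupportFn

variable {n : ℕ} {F : Euc n → ℝ}

theorem gaussExt_mem_USphere (hF : IsSupportFn n F) {x : Euc n} (hx : x ∈ USphere n) :
    gaussExt n F x ∈ USphere n := by
  have := hF.norm_gaussExt (ne_zero_of_mem_USphere hx)
  simp only [mem_sphere_iff_norm, sub_zero] at hx ⊢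
  rw [this, hx]

theorem injOn_gaussExt (hF : IsSupportFn n F) : InjOn (gaussExt n F) (puncBall n) := by
  intro x hx y hy hxy
  have hx0 := (mem_puncBall.1 hx).2
  have hy0 := (mem_puncBall.1 hy).2
  have hn : ‖x‖ = ‖y‖ := by rw [← hF.norm_gaussExt hx0, hxy, hF.norm_gaussExt hy0]
  have px : 0 < ‖x‖ := norm_pos_iff.2 hx0
  have py : 0 < ‖y‖ := norm_pos_iff.2 hy0
  have gx : 0 < ‖gradient F x‖ := norm_pos_iff.2 (hF.gradient_ne_zero hx0)
  have gy : 0 < ‖gradient F y‖ := norm_pos_iff.2 (hF.gradient_ne_zero hy0)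
  rw [gaussExt_eq, gaussExt_eq] at hxy
  have h := hF.eq_of_gradient_eq_smul (norm_inv_smul_mem_USphere hx0)
    (norm_inv_smul_mem_USphere hy0) (c := (‖x‖ / ‖gradient F x‖)⁻¹ * (‖y‖ / ‖gradient F y‖))
    (by positivity) (by
      rw [hF.gradient_smul (inv_pos.2 px) hx0, hF.gradient_smul (inv_pos.2 py) hy0, mul_smul,
        ← hxy, smul_smul, inv_mul_cancel₀ (by positivity), one_smul])
  rw [hn] at h
  exact smul_right_injective _ (inv_pos.2 py).ne' h

/-- Surjectivity onto the punctured ball: every unit vector is the direction of a support point,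
and the map preserves norms. -/
theorem gaussExt_image (hF : IsSupportFn n F) : gaussExt n F '' puncBall n = puncBall n := by
  ext u
  constructor
  · rintro ⟨x, hx, rfl⟩
    have h := mem_puncBall.1 hx
    have h1 := hF.norm_gaussExt h.2
    refine mem_puncBall.2 ⟨h1 ▸ h.1, norm_pos_iff.1 ?_⟩
    rw [h1]
    exact norm_pos_iff.2 h.2
  · intro hu
    obtain ⟨hu1, hu0⟩ := mem_puncBall.1 hu
    have pu : 0 < ‖u‖ := norm_pos_iff.2 hu0
    obtain ⟨x, hx, m, hm, hxm⟩ := hF.exists_gradient_eq_smul (norm_inv_smul_mem_USphere hu0)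
    have hx0 := ne_zero_of_mem_USphere hx
    have hnx : ‖x‖ = 1 := by simpa using hx
    refine ⟨‖u‖ • x, mem_puncBall.2 ⟨?_, smul_ne_zero pu.ne' hx0⟩, ?_⟩
    · simpa [norm_smul, hnx] using hu1
    · have hg : ‖gradient F x‖ = m⁻¹ := by
        have := congrArg norm hxm
        rw [norm_smul, norm_smul, norm_inv, norm_norm, inv_mul_cancel₀ pu.ne',
          Real.norm_of_nonneg hm.le] at this
        exact eq_inv_of_mul_eq_one_right this.symm
      rw [hF.gaussExt_smul pu hx0, gaussExt_eq, hnx, hg, one_div, inv_inv, ← hxm, smul_smul,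
        mul_inv_cancel₀ pu.ne', one_smul]

/-- Change of variables by the Gauss map: `gaussJac` is the density of the spherical measure
pulled back from directions of boundary points to directions of outer normals. -/
theorem sphInt_gaussJac_mul (hF : IsSupportFn n F) (P : Euc n → ℝ) :
    sphInt n (fun x => gaussJac n F x * P (gaussExt n F x)) = sphInt n P := by
  have h1 := setIntegral_puncBall n P
  have h2 := setIntegral_puncBall n fun x => gaussJac n F x * P (gaussExt n F x)
  have h3 := integral_image_eq_integral_abs_det_fderiv_smul volume (measurableSet_puncBall n)
    (f := gaussExt n F) (f' := fderiv ℝ (gaussExt n F))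
    (fun x hx => (hF.differentiableAt_gaussExt
      (mem_puncBall.1 hx).2).hasFDerivAt.hasFDerivWithinAt)
    hF.injOn_gaussExt (fun y => P (‖y‖⁻¹ • y))
  rw [hF.gaussExt_image, h1] at h3
  have h4 : ∫ x in puncBall n, |(fderiv ℝ (gaussExt n F) x).det| •
      P (‖gaussExt n F x‖⁻¹ • gaussExt n F x) =
      ∫ y in puncBall n, gaussJac n F (‖y‖⁻¹ • y) * P (gaussExt n F (‖y‖⁻¹ • y)) := by
    refine setIntegral_congr_fun (measurableSet_puncBall n) fun x hx => ?_
    have hx0 := (mem_puncBall.1 hx).2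
    have px : 0 < ‖x‖⁻¹ := inv_pos.2 (norm_pos_iff.2 hx0)
    have hxs := norm_inv_smul_mem_USphere hx0
    simp only [smul_eq_mul]
    rw [← hF.fderiv_gaussExt_smul px hx0, hF.det_fderiv_gaussExt hxs,
      abs_of_pos (hF.gaussJac_pos hxs), hF.norm_gaussExt hx0, hF.gaussExt_smul px hx0]
  rw [h4, h2] at h3
  exact (mul_left_cancel₀ (radFactor_pos n).ne' h3).symm

theorem sphInt_gaussJac (hF : IsSupportFn n F) : sphInt n (gaussJac n F) = sphArea n := by
  have h := hF.sphInt_gaussJac_mul fun _ => 1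
  simp only [mul_one] at h
  rw [h, sphInt, sphArea]
  simp [Measure.real]

end IsSupportFn

/-! ### Logarithmic integrals of linear functions on the sphere -/

/-- The orthogonal group acts transitively on the unit sphere. -/
theorem exists_isometry_map_eq {n : ℕ} {x y : Euc n} (hx : x ∈ USphere n) (hy : y ∈ USphere n) :
    ∃ A : Euc n ≃ₗᵢ[ℝ] Euc n, A x = y := by
  have hnx : ‖x‖ = 1 := by simpa using hx
  have hny : ‖y‖ = 1 := by simpa using hy
  exact ⟨(ℝ ∙ (x - y))ᗮ.reflection, Submodule.reflection_sub (hnx.trans hny.symm)⟩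

theorem inner_isometry_symm {n : ℕ} (A : Euc n ≃ₗᵢ[ℝ] Euc n) (x u : Euc n) :
    ⟪A x, u⟫ = ⟪x, A.symm u⟫ := by
  conv_lhs => rw [← A.apply_symm_apply u]
  exact A.inner_map_map _ _

/-- `log |y₀|` is integrable on the unit ball, since it is integrable on the cube `[-1, 1]ⁿ`. -/
theorem integrableOn_log_coord {n : ℕ} (i₀ : Fin n) :
    IntegrableOn (fun y : Euc n => Real.log |y i₀|) (ball 0 1) := by
  -- The integrand on the cube is a product of functions `g i` of the separate coordinates.
  let g : Fin n → ℝ → ℝ := fun i =>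
    if i = i₀ then (Icc (-1 : ℝ) 1).indicator Real.log else (Icc (-1 : ℝ) 1).indicator 1
  have hg : ∀ i, Integrable (g i) volume := by
    intro i
    by_cases hi : i = i₀
    · simp only [g, hi, if_true]
      rw [integrable_indicator_iff measurableSet_Icc]
      have := intervalIntegral.intervalIntegrable_log' (a := -1) (b := 1)
      rw [intervalIntegrable_iff_integrableOn_Icc_of_le (by norm_num)] at this
      exact this
    · simp only [g, hi, if_false]
      rw [integrable_indicator_iff measurableSet_Icc]
      exact continuousOn_const.integrableOn_compact isCompact_Icc
  have h1 : Integrable (fun y : Fin n → ℝ => ∏ i, g i (y i)) volume :=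
    Integrable.fintype_prod hg
  have h2 := (PiLp.volume_preserving_ofLp (Fin n)).integrable_comp_of_integrable h1
  refine (h2.integrableOn (s := ball 0 1)).congr ?_
  filter_upwards [ae_restrict_mem measurableSet_ball] with y hy
  have hc : ∀ i, y i ∈ Icc (-1 : ℝ) 1 := by
    intro i
    have h3 : ‖y i‖ ≤ ‖y‖ := PiLp.norm_apply_le y i
    have h4 : ‖y‖ < 1 := by simpa using hy
    exact abs_le.1 (h3.trans h4.le)
  simp only [Function.comp_apply]
  rw [Finset.prod_eq_single i₀]
  · simp only [g, if_true, indicator_of_mem (hc i₀), Real.log_abs]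
  · intro i _ hi
    simp only [g, hi, if_false, indicator_of_mem (hc i), Pi.one_apply]
  · simp

theorem integrable_log_inner {n : ℕ} (hn : 2 ≤ n) {x : Euc n} (hx : x ∈ USphere n) :
    Integrable (fun u : USphere n => Real.log |⟪x, (u : Euc n)⟫|) (sphMeasure n) := by
  let i₀ : Fin n := ⟨0, by omega⟩
  let e : Euc n := EuclideanSpace.single i₀ 1
  have he : e ∈ USphere n := by simp [e]
  obtain ⟨A, hA⟩ := exists_isometry_map_eq he hx
  have h1 := A.symm.measurePreserving.integrableOn_comp_preimage
    A.symm.toHomeomorph.measurableEmbedding (f := fun y : Euc n => Real.log |y i₀|)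
    (s := ball 0 1)
  have h2 : A.symm ⁻¹' ball 0 1 = ball 0 1 := by
    ext y
    simp
  rw [h2] at h1
  have h3 := h1.2 (integrableOn_log_coord i₀)
  have h4 : ∀ y, ⟪x, y⟫ = A.symm y i₀ := by
    intro y
    rw [← hA, inner_isometry_symm]
    simp [e, EuclideanSpace.inner_single_left]
  refine integrable_of_integrableOn_puncBall (P := fun u => Real.log |⟪x, u⟫|) ?_
  have h5 := h3.mono_set (inter_subset_left : puncBall n ⊆ ball 0 1)
  have hm : Measurable fun y : Euc n => Real.log |⟪x, ‖y‖⁻¹ • y⟫| := by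
    refine Real.measurable_log.comp (Measurable.abs ?_)
    exact (by fun_prop : Measurable fun y : Euc n => ‖y‖⁻¹ • y).const_inner
  refine Integrable.mono h5 hm.aestronglyMeasurable ?_
  filter_upwards [ae_restrict_mem (measurableSet_puncBall n)] with y hy
  obtain ⟨hy1, hy0⟩ := mem_puncBall.1 hy
  have py : 0 < ‖y‖ := norm_pos_iff.2 hy0
  have hnx : ‖x‖ = 1 := by simpa using hx
  simp only [Function.comp_apply, ← h4, inner_smul_right, Real.norm_eq_abs]
  rcases eq_or_ne ⟪x, y⟫ 0 with h0 | h0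
  · simp [h0]
  have a1 : |⟪x, y⟫| ≤ ‖y‖ := by simpa [hnx] using abs_real_inner_le_norm x y
  have a0 : 0 < |⟪x, y⟫| := abs_pos.2 h0
  have a2 : |‖y‖⁻¹ * ⟪x, y⟫| = ‖y‖⁻¹ * |⟪x, y⟫| := by
    rw [abs_mul, abs_of_pos (inv_pos.2 py)]
  have a3 : |⟪x, y⟫| ≤ ‖y‖⁻¹ * |⟪x, y⟫| :=
    le_mul_of_one_le_left a0.le (one_le_inv₀ py |>.2 hy1.le)
  have a4 : ‖y‖⁻¹ * |⟪x, y⟫| ≤ 1 := by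
    rw [inv_mul_le_iff₀ py, mul_one]
    exact a1
  rw [a2, abs_of_nonpos (Real.log_nonpos (by positivity) a4),
    abs_of_nonpos (Real.log_nonpos a0.le (a3.trans a4))]
  exact neg_le_neg (Real.log_le_log a0 a3)

/-- `∫ log |⟨x, u⟩| du` does not depend on the unit vector `x`. -/
theorem sphInt_log_inner_eq {n : ℕ} {x y : Euc n} (hx : x ∈ USphere n) (hy : y ∈ USphere n) :
    sphInt n (fun u => Real.log |⟪x, u⟫|) = sphInt n (fun u => Real.log |⟪y, u⟫|) := by
  obtain ⟨A, rfl⟩ := exists_isometry_map_eq hx hy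
  simp only [inner_isometry_symm A]
  exact (sphInt_comp_isometry n (fun u => Real.log |⟪x, u⟫|) A.symm).symm

theorem ae_inner_ne_zero {n : ℕ} {x : Euc n} (hx : x ∈ USphere n) :
    ∀ᵐ u : USphere n ∂(sphMeasure n), ⟪x, (u : Euc n)⟫ ≠ 0 := by
  have hm : MeasurableSet {u : USphere n | ⟪x, (u : Euc n)⟫ = 0} :=
    (isClosed_eq (by fun_prop) continuous_const).measurableSet
  rw [ae_iff]
  simp only [not_not]
  rw [sphMeasure, Measure.toSphere_apply' _ hm]
  refine mul_eq_zero_of_right _ (measure_mono_null ?_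
    (Measure.addHaar_submodule volume (LinearMap.ker (innerSL ℝ x : Euc n →L[ℝ] ℝ).toLinearMap) ?_))
  · rintro _ ⟨r, -, _, ⟨u, hu, rfl⟩, rfl⟩
    have : ⟪x, (u : Euc n)⟫ = 0 := hu
    simp [this]
  · intro h
    have : x ∈ LinearMap.ker (innerSL ℝ x : Euc n →L[ℝ] ℝ).toLinearMap := h ▸ Submodule.mem_top
    have h1 : ⟪x, x⟫ = 0 := this
    exact ne_zero_of_mem_USphere hx (inner_self_eq_zero.1 h1)

/-! ### Differentiation of spherical integrals along the flow -/

/-- The right-hand side of the flow equation for the support function. -/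
def flowVel (n : ℕ) (f : Euc n → ℝ) (φ : ℝ → ℝ) (h : Euc n → ℝ) (x : Euc n) : ℝ :=
  h x - flowEta n f φ h * f x * radTerm n h x ^ n / (φ (1 / h x) * sphDet n h x)

/-- The density `f / φ(1/h)`, whose multiple by `η` has total mass `|S^{n-1}|`. -/
def flowDens {n : ℕ} (f : Euc n → ℝ) (φ : ℝ → ℝ) (h : Euc n → ℝ) (x : Euc n) : ℝ :=
  f x / φ (1 / h x)

theorem continuous_sphere_of_continuousOn {n : ℕ} {α : Type*} [TopologicalSpace α] {w : Euc n → α}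
    (hw : ContinuousOn w {(0 : Euc n)}ᶜ) : Continuous fun x : USphere n => w x :=
  hw.comp_continuous continuous_subtype_val fun x => ne_zero_of_mem_USphere x.2

theorem integrable_sphere_of_continuous {n : ℕ} {w : USphere n → ℝ} (hw : Continuous w) :
    Integrable w (sphMeasure n) :=
  hw.integrable_of_hasCompactSupport (HasCompactSupport.of_compactSpace w)

namespace IsSupportFn

variable {n : ℕ} {F : Euc n → ℝ}

theorem continuous_sphere (hF : IsSupportFn n F) : Continuous fun x : USphere n => F x :=
  continuous_sphere_of_continuousOn hF.smooth.continuousOn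

/-- The flow equation in the form `∂ₜh = h (1 - η a / J)`, with `a = flowDens` and
`J = gaussJac`. -/
theorem flowVel_eq (hF : IsSupportFn n F) (f : Euc n → ℝ) (φ : ℝ → ℝ) {x : Euc n}
    (hx : x ∈ USphere n) : flowVel n f φ F x =
      F x * (1 - flowEta n f φ F * flowDens f φ F x / gaussJac n F x) := by
  have h1 := hF.pos x hx
  have h2 := hF.sphDet_pos hx
  have h3 := hF.gaussJac_pos hx
  have h4 : radTerm n F x ^ n ≠ 0 := by
    intro h
    rw [gaussJac, h, div_zero] at h3
    exact lt_irrefl _ h3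
  rw [flowVel, flowDens, gaussJac]
  generalize φ (1 / F x) = p
  by_cases h5 : p = 0
  · simp [h5]
  · field_simp

end IsSupportFn

namespace IsFlowSol

variable {n : ℕ} {f : Euc n → ℝ} {φ : ℝ → ℝ} {H : ℝ → Euc n → ℝ}

theorem continuous_max (hH : IsFlowSol n f φ (Ici 0) H) :
    Continuous fun p : ℝ × USphere n => H (max p.1 0) p.2 :=
  hH.smooth.continuousOn.comp_continuous
    (f := fun p : ℝ × USphere n => ((max p.1 0, (p.2 : Euc n)) : ℝ × Euc n)) (by fun_prop)
    fun p => ⟨mem_Ici.2 (le_max_right _ _), ne_zero_of_mem_USphere p.2.2⟩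

theorem hasDerivAt (hH : IsFlowSol n f φ (Ici 0) H) {t : ℝ} (ht : 0 < t) {x : Euc n}
    (hx : x ∈ USphere n) : HasDerivAt (fun s => H s x) (flowVel n f φ (H t) x) t :=
  (hH.eqn t ht.le x hx).hasDerivAt (Ici_mem_nhds ht)

/-- The velocity is jointly continuous, being a partial derivative of the smooth solution. -/
theorem continuousOn_flowVel (hH : IsFlowSol n f φ (Ici 0) H) :
    ContinuousOn (fun p : ℝ × USphere n => flowVel n f φ (H p.1) p.2) (Ioi 0 ×ˢ univ) := by
  have ho : IsOpen (Ioi (0 : ℝ) ×ˢ {(0 : Euc n)}ᶜ) := isOpen_Ioi.prod isOpen_compl_singleton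
  have hs : ContDiffOn ℝ (⊤ : ℕ∞) (fun p : ℝ × Euc n => H p.1 p.2) (Ioi 0 ×ˢ {(0 : Euc n)}ᶜ) :=
    hH.smooth.mono (prod_mono Ioi_subset_Ici_self subset_rfl)
  have hc := hs.continuousOn_fderiv_of_isOpen ho (by simp)
  have hc' : ContinuousOn (fun p : ℝ × USphere n =>
      fderiv ℝ (fun p : ℝ × Euc n => H p.1 p.2) (p.1, (p.2 : Euc n)) (1, 0)) (Ioi 0 ×ˢ univ) := by
    refine ContinuousOn.clm_apply (hc.comp (by fun_prop) ?_) continuousOn_const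
    exact fun p hp => ⟨hp.1, ne_zero_of_mem_USphere p.2.2⟩
  refine hc'.congr fun p hp => ?_
  have hp0 : (p.1, (p.2 : Euc n)) ∈ Ioi (0 : ℝ) ×ˢ {(0 : Euc n)}ᶜ :=
    ⟨hp.1, ne_zero_of_mem_USphere p.2.2⟩
  have h1 := ((hs.contDiffAt (ho.mem_nhds hp0)).differentiableAt (by simp)).hasFDerivAt
  have h2 := h1.comp_hasDerivAt p.1 ((hasDerivAt_id p.1).prodMk
    (hasDerivAt_const p.1 (p.2 : Euc n)))
  exact (hH.hasDerivAt hp.1 p.2.2).unique h2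

theorem hasDerivAt_sphInt (hH : IsFlowSol n f φ (Ici 0) H) {w : Euc n → ℝ}
    (hw : Continuous fun x : USphere n => w x) {g g' : ℝ → ℝ}
    (hg : ∀ s ∈ Ioi (0 : ℝ), HasDerivAt g (g' s) s) (hg' : ContinuousOn g' (Ioi 0))
    {t : ℝ} (ht : 0 < t) :
    HasDerivAt (fun s => sphInt n fun x => w x * g (H s x))
      (sphInt n fun x => w x * (g' (H t x) * flowVel n f φ (H t) x)) t := by
  have hHc : ContinuousOn (fun p : ℝ × USphere n => H p.1 p.2) (Ioi 0 ×ˢ univ) :=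
    hH.smooth.continuousOn.comp (f := fun p : ℝ × USphere n => ((p.1, (p.2 : Euc n)) : ℝ × Euc n))
      (by fun_prop) fun p hp => ⟨mem_Ici.2 (le_of_lt hp.1), ne_zero_of_mem_USphere p.2.2⟩
  have hD : ContinuousOn (fun p : ℝ × USphere n =>
      w p.2 * (g' (H p.1 p.2) * flowVel n f φ (H p.1) p.2)) (Ioi 0 ×ˢ univ) := by
    refine (hw.comp continuous_snd).continuousOn.mul (ContinuousOn.mul ?_ hH.continuousOn_flowVel)
    exact hg'.comp hHc fun p hp => (hH.body p.1 (mem_Ici.2 (le_of_lt hp.1))).pos _ p.2.2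
  have hsub : Icc (t / 2) (2 * t) ×ˢ (univ : Set (USphere n)) ⊆ Ioi 0 ×ˢ univ :=
    prod_mono (fun s hs => lt_of_lt_of_le (by positivity) hs.1) subset_rfl
  obtain ⟨C, hC⟩ := (isCompact_Icc.prod isCompact_univ).exists_bound_of_continuousOn (hD.mono hsub)
  have hslice : ∀ s, 0 < s → Continuous fun x : USphere n => w x * g (H s x) := by
    intro s hs
    refine hw.mul (continuous_iff_continuousAt.2 fun x => ?_)
    have hb := hH.body s hs.le
    exact (hg _ (hb.pos _ x.2)).continuousAt.comp (f := fun x : USphere n => H s x)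
      hb.continuous_sphere.continuousAt
  have hslice' : Continuous fun x : USphere n => w x * (g' (H t x) * flowVel n f φ (H t) x) :=
    hD.comp_continuous (f := fun x : USphere n => (t, x)) (by fun_prop) fun x => ⟨ht, trivial⟩
  refine (hasDerivAt_integral_of_dominated_loc_of_deriv_le (bound := fun _ => C)
    (F' := fun s (x : USphere n) => w x * (g' (H s x) * flowVel n f φ (H s) x))
    (Icc_mem_nhds (half_lt_self ht) (lt_two_mul_self ht)) ?_
    (integrable_sphere_of_continuous (hslice t ht)) hslice'.aestronglyMeasurable
    ?_ (integrable_const C) ?_).2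
  · filter_upwards [Ioi_mem_nhds ht] with s hs using (hslice s hs).aestronglyMeasurable
  · exact Eventually.of_forall fun x s hs => hC (s, x) ⟨hs, trivial⟩
  · refine Eventually.of_forall fun x s hs => ?_
    have hs0 : 0 < s := lt_of_lt_of_le (by positivity) hs.1
    exact ((hg _ ((hH.body s hs0.le).pos _ x.2)).comp s (hH.hasDerivAt hs0 x.2)).const_mul _

theorem continuous_sphInt (hH : IsFlowSol n f φ (Ici 0) H) {w : Euc n → ℝ}
    (hw : Continuous fun x : USphere n => w x) {g : ℝ → ℝ} (hg : ContinuousOn g (Ioi 0)) :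
    Continuous fun s => sphInt n fun x => w x * g (H (max s 0) x) := by
  have h1 : Continuous fun p : ℝ × USphere n => w p.2 * g (H (max p.1 0) p.2) :=
    (hw.comp continuous_snd).mul (hg.comp_continuous hH.continuous_max
      fun p => (hH.body _ (mem_Ici.2 (le_max_right _ _))).pos _ p.2.2)
  have := continuous_parametric_integral_of_continuous (μ := sphMeasure n)
    (f := fun (s : ℝ) (x : USphere n) => w x * g (H (max s 0) x)) h1 isCompact_univ
  simpa [sphInt] using this


end IsFlowSol

/-! ### The entropy and the lower bound for the support functions -/

/-- The reciprocal `u ↦ max_x ⟨x, u⟩ / h(x)` of the radial function of the body with support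
function `h`, i.e. its Minkowski gauge. -/
def gau (n : ℕ) (h : Euc n → ℝ) (u : Euc n) : ℝ :=
  sSup ((fun x : USphere n => ⟪(x : Euc n), u⟫ / h x) '' univ)

namespace IsSupportFn

variable {n : ℕ} {F : Euc n → ℝ}

theorem continuous_gauge_quot (hF : IsSupportFn n F) (u : Euc n) :
    Continuous fun x : USphere n => ⟪(x : Euc n), u⟫ / F x :=
  (by fun_prop : Continuous fun x : USphere n => ⟪(x : Euc n), u⟫).div hF.continuous_sphere
    fun x => (hF.pos _ x.2).ne'

theorem le_gau (hF : IsSupportFn n F) {x : Euc n} (hx : x ∈ USphere n) (u : Euc n) :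
    ⟪x, u⟫ / F x ≤ gau n F u :=
  le_csSup (isCompact_univ.image (hF.continuous_gauge_quot u)).bddAbove ⟨⟨x, hx⟩, trivial, rfl⟩

theorem gau_pos (hF : IsSupportFn n F) {u : Euc n} (hu : u ∈ USphere n) : 0 < gau n F u := by
  refine lt_of_lt_of_le ?_ (hF.le_gau hu u)
  exact div_pos (real_inner_self_pos.2 (ne_zero_of_mem_USphere hu)) (hF.pos u hu)

theorem inner_gaussExt (hF : IsSupportFn n F) {x : Euc n} (hx : x ∈ USphere n) :
    ⟪x, gaussExt n F x⟫ = ‖gradient F x‖⁻¹ * F x := by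
  have hnx : ‖x‖ = 1 := by simpa using hx
  rw [gaussExt_eq, hnx, inner_smul_right, real_inner_comm,
    hF.inner_gradient_self (ne_zero_of_mem_USphere hx), one_div]

theorem inner_gaussExt_pos (hF : IsSupportFn n F) {x : Euc n} (hx : x ∈ USphere n) :
    0 < ⟪x, gaussExt n F x⟫ := by
  rw [hF.inner_gaussExt hx]
  exact mul_pos (inv_pos.2 (norm_pos_iff.2 (hF.gradient_ne_zero (ne_zero_of_mem_USphere hx))))
    (hF.pos x hx)

/-- The gauge in the direction of the support point with normal `x` is computed by `x`. -/
theorem gau_gaussExt (hF : IsSupportFn n F) {x : Euc n} (hx : x ∈ USphere n) :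
    gau n F (gaussExt n F x) = ⟪x, gaussExt n F x⟫ / F x := by
  refine le_antisymm (csSup_le ⟨_, ⟨⟨x, hx⟩, trivial, rfl⟩⟩ ?_) (hF.le_gau hx _)
  rintro _ ⟨y, -, rfl⟩
  have hnx : ‖x‖ = 1 := by simpa using hx
  have hρ : 0 < ‖gradient F x‖⁻¹ :=
    inv_pos.2 (norm_pos_iff.2 (hF.gradient_ne_zero (ne_zero_of_mem_USphere hx)))
  rw [hF.inner_gaussExt hx, mul_div_cancel_right₀ _ (hF.pos x hx).ne', div_le_iff₀ (hF.pos _ y.2),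
    gaussExt_eq, hnx, inner_smul_right, one_div, real_inner_comm]
  exact mul_le_mul_of_nonneg_left (hF.inner_gradient_le hx y.2) hρ.le

theorem continuous_gaussExt_sphere (hF : IsSupportFn n F) :
    Continuous fun x : USphere n => gaussExt n F x :=
  continuous_sphere_of_continuousOn fun _ hx =>
    (hF.differentiableAt_gaussExt hx).continuousAt.continuousWithinAt

theorem continuous_gau (hF : IsSupportFn n F) : Continuous (gau n F) := by
  refine IsCompact.continuous_sSup (f := fun (u : Euc n) (x : USphere n) => ⟪(x : Euc n), u⟫ / F x)
    isCompact_univ ?_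
  exact (by fun_prop : Continuous fun p : Euc n × USphere n => ⟪(p.2 : Euc n), p.1⟫).div
    (hF.continuous_sphere.comp continuous_snd) fun p => (hF.pos _ p.2.2).ne'

end IsSupportFn

namespace IsFlowSol

variable {n : ℕ} {f : Euc n → ℝ} {φ : ℝ → ℝ} {H : ℝ → Euc n → ℝ}


/-- The integral of the logarithm of the gauge is continuous in time. -/
theorem continuous_entropy (hH : IsFlowSol n f φ (Ici 0) H) :
    Continuous fun t => sphInt n fun u => Real.log (gau n (H (max t 0)) u) := by
  have h1 : Continuous fun p : ℝ × USphere n => gau n (H (max p.1 0)) p.2 := by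
    refine IsCompact.continuous_sSup (f := fun (p : ℝ × USphere n) (x : USphere n) =>
      ⟪(x : Euc n), p.2⟫ / H (max p.1 0) x) isCompact_univ ?_
    refine (by fun_prop : Continuous fun q : (ℝ × USphere n) × USphere n =>
      ⟪(q.2 : Euc n), (q.1.2 : Euc n)⟫).div ?_ ?_
    · exact hH.continuous_max.comp
        (by fun_prop : Continuous fun q : (ℝ × USphere n) × USphere n => (q.1.1, q.2))
    · exact fun q => ((hH.body _ (mem_Ici.2 (le_max_right _ _))).pos _ q.2.2).ne'
  have h2 : Continuous fun p : ℝ × USphere n => Real.log (gau n (H (max p.1 0)) p.2) :=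
    h1.log fun p => ((hH.body _ (mem_Ici.2 (le_max_right _ _))).gau_pos p.2.2).ne'
  have := continuous_parametric_integral_of_continuous (μ := sphMeasure n)
    (f := fun (s : ℝ) (x : USphere n) => Real.log (gau n (H (max s 0)) x)) h2 isCompact_univ
  simpa [sphInt] using this

theorem continuous_flowDens (hH : IsFlowSol n f φ (Ici 0) H)
    (hf : Continuous fun x : USphere n => f x) (hφ : ContinuousOn φ (Ioi 0))
    (hφ_pos : ∀ s ∈ Ioi (0 : ℝ), 0 < φ s) {t : ℝ} (ht : 0 ≤ t) :
    Continuous fun x : USphere n => flowDens f φ (H t) x := by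
  have hb := hH.body t ht
  have h1 : ∀ x : USphere n, 1 / H t x ∈ Ioi (0 : ℝ) := fun x => one_div_pos.2 (hb.pos _ x.2)
  exact hf.div (hφ.comp_continuous (continuous_const.div hb.continuous_sphere
    fun x => (hb.pos _ x.2).ne') h1) fun x => (hφ_pos _ (h1 x)).ne'

/-- The measures `J dx` and `η f/φ(1/h) dx` have the same total mass. -/
theorem sphInt_gaussJac_sub (hH : IsFlowSol n f φ (Ici 0) H)
    (hf : Continuous fun x : USphere n => f x) (hφ : ContinuousOn φ (Ioi 0))
    (hφ_pos : ∀ s ∈ Ioi (0 : ℝ), 0 < φ s) {t : ℝ} (ht : 0 ≤ t)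
    (hD : sphInt n (flowDens f φ (H t)) ≠ 0) :
    sphInt n (fun x => gaussJac n (H t) x - flowEta n f φ (H t) * flowDens f φ (H t) x) = 0 := by
  have hb := hH.body t ht
  have h1 := integrable_sphere_of_continuous hb.continuous_gaussJac
  have h2 := (integrable_sphere_of_continuous
    (hH.continuous_flowDens hf hφ hφ_pos ht)).const_mul (flowEta n f φ (H t))
  have h3 := integral_sub h1 h2
  rw [integral_const_mul] at h3
  rw [sphInt, h3]
  have h4 := hb.sphInt_gaussJac
  rw [sphInt] at h4
  have h5 : flowEta n f φ (H t) * sphInt n (flowDens f φ (H t)) = sphArea n := by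
    rw [flowEta]
    exact div_mul_cancel₀ _ hD
  rw [h4, sub_eq_zero]
  exact h5.symm

/-- First variation inequality for the entropy: the gauge is a maximum over normals, and the
maximising normal at time `t` is still a competitor at time `s`. -/
theorem entropy_sub_le (hH : IsFlowSol n f φ (Ici 0) H) {s t : ℝ} (hs : 0 ≤ s) (ht : 0 ≤ t) :
    sphInt n (fun u => Real.log (gau n (H t) u)) - sphInt n (fun u => Real.log (gau n (H s) u)) ≤
      sphInt n (fun x => gaussJac n (H t) x * Real.log (H s x)) -
        sphInt n (fun x => gaussJac n (H t) x * Real.log (H t x)) := by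
  have bs := hH.body s hs
  have bt := hH.body t ht
  have cJ := bt.continuous_gaussJac
  have cl : ∀ {G : Euc n → ℝ}, IsSupportFn n G → Continuous fun x : USphere n => Real.log (G x) :=
    fun hG => hG.continuous_sphere.log fun x => (hG.pos _ x.2).ne'
  have cg : ∀ {G : Euc n → ℝ}, IsSupportFn n G →
      Continuous fun x : USphere n => Real.log (gau n G (gaussExt n (H t) x)) := fun hG =>
    (hG.continuous_gau.comp bt.continuous_gaussExt_sphere).log
      fun x => (hG.gau_pos (bt.gaussExt_mem_USphere x.2)).ne'
  rw [← bt.sphInt_gaussJac_mul fun u => Real.log (gau n (H t) u),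
    ← bt.sphInt_gaussJac_mul fun u => Real.log (gau n (H s) u)]
  simp only [sphInt]
  rw [← integral_sub (integrable_sphere_of_continuous (cJ.fun_mul (cg bt)))
      (integrable_sphere_of_continuous (cJ.fun_mul (cg bs))),
    ← integral_sub (integrable_sphere_of_continuous (cJ.fun_mul (cl bs)))
      (integrable_sphere_of_continuous (cJ.fun_mul (cl bt)))]
  refine integral_mono
    (integrable_sphere_of_continuous ((cJ.fun_mul (cg bt)).fun_sub (cJ.fun_mul (cg bs))))
    (integrable_sphere_of_continuous ((cJ.fun_mul (cl bs)).fun_sub (cJ.fun_mul (cl bt))))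
    fun x => ?_
  have hi := bt.inner_gaussExt_pos x.2
  have e1 : Real.log (gau n (H t) (gaussExt n (H t) x)) =
      Real.log ⟪(x : Euc n), gaussExt n (H t) x⟫ - Real.log (H t x) := by
    rw [bt.gau_gaussExt x.2, Real.log_div hi.ne' (bt.pos _ x.2).ne']
  have e2 : Real.log ⟪(x : Euc n), gaussExt n (H t) x⟫ - Real.log (H s x) ≤
      Real.log (gau n (H s) (gaussExt n (H t) x)) := by
    rw [← Real.log_div hi.ne' (bs.pos _ x.2).ne']
    exact Real.log_le_log (div_pos hi (bs.pos _ x.2)) (bs.le_gau x.2 _)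
  have hJ := (bt.gaussJac_pos x.2).le
  simp only [← mul_sub]
  exact mul_le_mul_of_nonneg_left (by linarith) hJ

/-- The entropy does not increase: by `entropy_sub_le` its difference quotients are controlled by
those of `s ↦ ∫ J_t log h_s`, whose derivative at `s = t` vanishes. -/
theorem entropy_le (hH : IsFlowSol n f φ (Ici 0) H)
    (hf : Continuous fun x : USphere n => f x) (hφ : ContinuousOn φ (Ioi 0))
    (hφ_pos : ∀ s ∈ Ioi (0 : ℝ), 0 < φ s)
    (hD : ∀ t, 0 ≤ t → sphInt n (flowDens f φ (H t)) ≠ 0) {T : ℝ} (hT : 0 ≤ T) :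
    sphInt n (fun u => Real.log (gau n (H T) u)) ≤
      sphInt n (fun u => Real.log (gau n (H 0) u)) := by
  set L : ℝ → ℝ := fun t => sphInt n fun u => Real.log (gau n (H (max t 0)) u) with hL
  have hLc : Continuous L := hH.continuous_entropy
  have hLeq : ∀ t, 0 ≤ t → L t = sphInt n fun u => Real.log (gau n (H t) u) := fun t ht => by
    simp only [hL, max_eq_left ht]
  -- `entropy_sub_le` controls the difference quotients of `L` from the left, hence the right ones
  -- of the time-reversed function.
  have key := image_le_of_liminf_slope_right_le_deriv_boundary (f := fun τ => -L (T - τ))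
    (a := 0) (b := T) (B := fun _ => -L T) (B' := fun _ => 0)
    (by fun_prop) (by simp) continuousOn_const (fun x _ => hasDerivWithinAt_const _ _ _) ?_
    (right_mem_Icc.2 hT)
  · simp only [sub_self, neg_le_neg_iff] at key
    rwa [hLeq T hT, hLeq 0 le_rfl] at key
  intro τ hτ r hr
  have ht : 0 < T - τ := sub_pos.2 hτ.2
  set t := T - τ with htdef
  have bt := hH.body t ht.le
  set G : ℝ → ℝ := fun s => sphInt n fun x => gaussJac n (H t) x * Real.log (H s x) with hG
  have hGd : HasDerivAt G 0 t := by
    have h1 := hH.hasDerivAt_sphInt bt.continuous_gaussJac (g := Real.log) (g' := fun s => s⁻¹)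
      (fun s hs => Real.hasDerivAt_log (ne_of_gt hs))
      (continuousOn_inv₀.mono fun s hs => ne_of_gt hs) ht
    have h2 := hH.sphInt_gaussJac_sub hf hφ hφ_pos ht.le (hD t ht.le)
    convert h1 using 1
    rw [← h2]
    refine integral_congr_ae (Eventually.of_forall fun x => ?_)
    have hJ := bt.gaussJac_pos x.2
    have hh := bt.pos _ x.2
    simp only [bt.flowVel_eq f φ x.2]
    field_simp
  have hGr : HasDerivAt (fun z => G (T - z)) 0 τ := by
    have := HasDerivAt.comp_const_sub T τ hGd
    simpa using this
  have hsl := (hasDerivAt_iff_tendsto_slope.1 hGr).mono_left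
    (nhdsWithin_mono τ (fun z (hz : τ < z) => (ne_of_gt hz : z ≠ τ)))
  refine Eventually.frequently ?_
  filter_upwards [hsl.eventually (gt_mem_nhds hr), Ioo_mem_nhdsGT hτ.2] with z hz hz'
  refine lt_of_le_of_lt ?_ hz
  have hz0 : 0 ≤ T - z := sub_nonneg.2 hz'.2.le
  have h3 := hH.entropy_sub_le hz0 ht.le
  rw [slope_def_field, slope_def_field]
  refine div_le_div_of_nonneg_right ?_ (sub_nonneg.2 hz'.1.le)
  rw [← hLeq _ hz0, ← hLeq _ ht.le] at h3
  simp only [hG, ← htdef]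
  linarith

end IsFlowSol

/-! ### Uniform bounds -/

theorem sphInt_pos {n : ℕ} (hn : 2 ≤ n) {w : Euc n → ℝ} (hw : Continuous fun x : USphere n => w x)
    (hpos : ∀ x ∈ USphere n, 0 < w x) : 0 < sphInt n w := by
  have : Nonempty (Fin n) := ⟨⟨0, by omega⟩⟩
  rw [sphInt, integral_pos_iff_support_of_nonneg (fun x => (hpos _ x.2).le)
    (integrable_sphere_of_continuous hw)]
  have : Function.support (fun x : USphere n => w x) = univ :=
    eq_univ_of_forall fun x => (hpos _ x.2).ne'
  rw [this]
  exact Measure.measure_univ_pos.2 (Measure.toSphere_ne_zero _)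

theorem sphInt_const (n : ℕ) (c : ℝ) : sphInt n (fun _ => c) = sphArea n * c := by
  simp [sphInt, sphArea, Measure.real]

theorem sphArea_pos {n : ℕ} (hn : 2 ≤ n) : 0 < sphArea n := by
  have := sphInt_pos hn (w := fun _ => 1) continuous_const fun _ _ => one_pos
  rwa [sphInt_const, mul_one] at this

theorem sphInt_log_inner_nonpos {n : ℕ} {x : Euc n} (hx : x ∈ USphere n) :
    sphInt n (fun u => Real.log |⟪x, u⟫|) ≤ 0 := by
  refine integral_nonpos fun u => Real.log_nonpos (abs_nonneg _) ?_
  have hnx : ‖x‖ = 1 := by simpa using hx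
  simpa [hnx] using abs_real_inner_le_norm x (u : Euc n)

namespace IsFlowSol

variable {n : ℕ} {f : Euc n → ℝ} {φ : ℝ → ℝ} {H : ℝ → Euc n → ℝ}

theorem sphInt_flowDens_pos (hn : 2 ≤ n) (hH : IsFlowSol n f φ (Ici 0) H)
    (hf : Continuous fun x : USphere n => f x) (hf_pos : ∀ x ∈ USphere n, 0 < f x)
    (hφ : ContinuousOn φ (Ioi 0)) (hφ_pos : ∀ s ∈ Ioi (0 : ℝ), 0 < φ s) {t : ℝ} (ht : 0 ≤ t) :
    0 < sphInt n (flowDens f φ (H t)) :=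
  sphInt_pos hn (hH.continuous_flowDens hf hφ hφ_pos ht) fun x hx =>
    div_pos (hf_pos x hx) (hφ_pos _ (one_div_pos.2 ((hH.body t ht).pos x hx)))

/-- If the body were thin in a direction `x`, its gauge would be large off `x^⊥`, contradicting the
entropy bound since `log |⟨x, u⟩|` is integrable. -/
theorem exists_lower_bound (hn : 2 ≤ n) (hH : IsFlowSol n f φ (Ici 0) H)
    (hf : Continuous fun x : USphere n => f x) (hf_pos : ∀ x ∈ USphere n, 0 < f x)
    (hφ : ContinuousOn φ (Ioi 0)) (hφ_pos : ∀ s ∈ Ioi (0 : ℝ), 0 < φ s) :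
    ∃ c₀ : ℝ, 0 < c₀ ∧ ∀ t, 0 ≤ t → ∀ x ∈ USphere n, c₀ ≤ H t x := by
  let e : Euc n := EuclideanSpace.single ⟨0, by omega⟩ 1
  have he : e ∈ USphere n := by simp [e]
  set c := sphInt n fun u => Real.log |⟪e, u⟫| with hc
  set L₀ := sphInt n fun u => Real.log (gau n (H 0) u)
  have hA := sphArea_pos hn
  refine ⟨Real.exp ((c - L₀) / sphArea n), Real.exp_pos _, fun t ht x hx => ?_⟩
  have bt := hH.body t ht
  have hxp := bt.pos x hx
  rw [← Real.le_log_iff_exp_le hxp, div_le_iff₀ hA]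
  have hL : sphInt n (fun u => Real.log (gau n (H t) u)) ≤ L₀ :=
    hH.entropy_le hf hφ hφ_pos
      (fun s hs => (hH.sphInt_flowDens_pos hn hf hf_pos hφ hφ_pos hs).ne') ht
  have hlog := integrable_log_inner hn hx
  have h1 : sphInt n (fun u => Real.log |⟪x, u⟫| - Real.log (H t x)) ≤
      sphInt n (fun u => Real.log (gau n (H t) u)) := by
    refine integral_mono_ae (hlog.sub (integrable_const _)) (integrable_sphere_of_continuous
      ((bt.continuous_gau.comp continuous_subtype_val).log fun u => (bt.gau_pos u.2).ne')) ?_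
    filter_upwards [ae_inner_ne_zero hx] with u hu
    rw [← Real.log_div (abs_ne_zero.2 hu) hxp.ne']
    refine Real.log_le_log (div_pos (abs_pos.2 hu) hxp) ?_
    rcases abs_cases ⟪x, (u : Euc n)⟫ with h | h
    · rw [h.1]
      exact bt.le_gau hx _
    · have hx' : -x ∈ USphere n := by simpa using hx
      have := bt.le_gau hx' u
      rwa [hH.symm t ht, inner_neg_left, ← h.1] at this
  have h2 : sphInt n (fun u => Real.log |⟪x, u⟫| - Real.log (H t x)) =
      c - sphArea n * Real.log (H t x) := by
    rw [hc, sphInt_log_inner_eq he hx, ← sphInt_const]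
    exact integral_sub hlog (integrable_const _)
  linarith

/-- The derivative of the Orlicz functional is nonnegative: by the equality of masses of
`J = gaussJac` and `ηa`, where `a = f/φ(1/h)`, it is the integral of `(ηa - J)² / (ηJ)`. -/
theorem sphInt_dissipation_nonneg (hn : 2 ≤ n) (hH : IsFlowSol n f φ (Ici 0) H)
    (hf : Continuous fun x : USphere n => f x) (hf_pos : ∀ x ∈ USphere n, 0 < f x)
    (hφ : ContinuousOn φ (Ioi 0)) (hφ_pos : ∀ s ∈ Ioi (0 : ℝ), 0 < φ s) {t : ℝ} (ht : 0 ≤ t) :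
    0 ≤ sphInt n (fun x => flowDens f φ (H t) x *
      (flowEta n f φ (H t) * flowDens f φ (H t) x / gaussJac n (H t) x - 1)) := by
  have bt := hH.body t ht
  have hD := hH.sphInt_flowDens_pos hn hf hf_pos hφ hφ_pos ht
  have hη : 0 < flowEta n f φ (H t) := div_pos (sphArea_pos hn) hD
  have h0 := hH.sphInt_gaussJac_sub hf hφ hφ_pos ht hD.ne'
  have ca := hH.continuous_flowDens hf hφ hφ_pos ht
  have cJ := bt.continuous_gaussJac
  set η := flowEta n f φ (H t)
  have h1 : sphInt n (fun x => -η⁻¹ * (gaussJac n (H t) x - η * flowDens f φ (H t) x)) = 0 := by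
    rw [sphInt] at h0 ⊢
    rw [integral_const_mul, h0, mul_zero]
  rw [← h1]
  refine integral_mono (integrable_sphere_of_continuous
      (continuous_const.mul (cJ.sub (continuous_const.mul ca))))
    (integrable_sphere_of_continuous (ca.mul (((continuous_const.mul ca).div cJ
      fun x => (bt.gaussJac_pos x.2).ne').sub continuous_const))) fun x => ?_
  have hJ := bt.gaussJac_pos x.2
  simp only
  rw [← sub_nonneg]
  have : flowDens f φ (H t) x * (η * flowDens f φ (H t) x / gaussJac n (H t) x - 1) -
      -η⁻¹ * (gaussJac n (H t) x - η * flowDens f φ (H t) x) =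
      η⁻¹ * ((η * flowDens f φ (H t) x - gaussJac n (H t) x) ^ 2 / gaussJac n (H t) x) := by
    field_simp
    ring
  rw [this]
  positivity

/-- Monotonicity of the Orlicz functional `∫ f g(h_t)` along the flow. -/
theorem potential_le (hn : 2 ≤ n) (hH : IsFlowSol n f φ (Ici 0) H)
    (hf : Continuous fun x : USphere n => f x) (hf_pos : ∀ x ∈ USphere n, 0 < f x)
    (hφ : ContinuousOn φ (Ioi 0)) (hφ_pos : ∀ s ∈ Ioi (0 : ℝ), 0 < φ s) {g : ℝ → ℝ}
    (hg : ∀ s ∈ Ioi (0 : ℝ), HasDerivAt g (-(1 / (s * φ (1 / s)))) s) {T : ℝ} (hT : 0 ≤ T) :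
    sphInt n (fun x => f x * g (H 0 x)) ≤ sphInt n (fun x => f x * g (H T x)) := by
  have hgc : ContinuousOn g (Ioi 0) := fun s hs => (hg s hs).continuousAt.continuousWithinAt
  have hg' : ContinuousOn (fun s => -(1 / (s * φ (1 / s)))) (Ioi 0) := by
    have h1 : ContinuousOn (fun s : ℝ => 1 / s) (Ioi 0) :=
      continuousOn_const.div continuousOn_id fun s hs => ne_of_gt hs
    have h2 : ∀ s ∈ Ioi (0 : ℝ), 1 / s ∈ Ioi (0 : ℝ) := fun s hs => mem_Ioi.2 (one_div_pos.2 hs)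
    exact (continuousOn_const.div (continuousOn_id.mul (hφ.comp h1 h2))
      fun s hs => (mul_pos hs (hφ_pos _ (h2 s hs))).ne').neg
  set Φ : ℝ → ℝ := fun s => sphInt n fun x => f x * g (H s x)
  have hΦc : ContinuousOn Φ (Ici 0) := by
    refine (hH.continuous_sphInt hf hgc).continuousOn.congr fun s hs => ?_
    simp only [Φ, max_eq_left (mem_Ici.1 hs)]
  have hΦd : ∀ t, 0 < t → HasDerivAt Φ (sphInt n (fun x => flowDens f φ (H t) x *
      (flowEta n f φ (H t) * flowDens f φ (H t) x / gaussJac n (H t) x - 1))) t := by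
    intro t ht
    have bt := hH.body t ht.le
    convert hH.hasDerivAt_sphInt hf hg hg' ht using 1
    refine integral_congr_ae (Eventually.of_forall fun x => ?_)
    have hJ := bt.gaussJac_pos x.2
    have hh := bt.pos _ x.2
    have hp := hφ_pos _ (mem_Ioi.2 (one_div_pos.2 hh))
    simp only [bt.flowVel_eq f φ x.2, flowDens]
    generalize φ (1 / H t x) = p at hp
    field_simp
    ring
  have hmono : MonotoneOn Φ (Ici 0) := by
    refine monotoneOn_of_deriv_nonneg (convex_Ici 0) hΦc ?_ ?_
    · rw [interior_Ici]
      exact fun t ht => (hΦd t ht).differentiableAt.differentiableWithinAt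
    · rw [interior_Ici]
      intro t ht
      rw [(hΦd t ht).deriv]
      exact hH.sphInt_dissipation_nonneg hn hf hf_pos hφ hφ_pos (le_of_lt ht)
  exact hmono self_mem_Ici (mem_Ici.2 hT) hT

end IsFlowSol

/-- An even support function dominates that of a segment `[-p, p]` with `‖p‖ ≥ F(θ)`. -/
theorem IsSupportFn.exists_direction {n : ℕ} {F : Euc n → ℝ} (hF : IsSupportFn n F)
    (heven : ∀ x, F (-x) = F x) {θ : Euc n} (hθ : θ ∈ USphere n) :
    ∃ e ∈ USphere n, ∀ x ∈ USphere n, F θ * |⟪e, x⟫| ≤ F x := by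
  have hθ0 := ne_zero_of_mem_USphere hθ
  have hnθ : ‖θ‖ = 1 := by simpa using hθ
  have hp := hF.gradient_ne_zero hθ0
  refine ⟨_, norm_inv_smul_mem_USphere hp, fun x hx => ?_⟩
  have h1 : F θ ≤ ‖gradient F θ‖ := by
    rw [← hF.inner_gradient_self hθ0]
    simpa [hnθ] using real_inner_le_norm (gradient F θ) θ
  have h2 : |⟪gradient F θ, x⟫| ≤ F x := by
    refine abs_le.2 ⟨?_, hF.inner_gradient_le hθ hx⟩
    have := hF.inner_gradient_le hθ (by simpa using hx : -x ∈ USphere n)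
    rw [inner_neg_right, heven] at this
    linarith
  have hp' : 0 < ‖gradient F θ‖ := norm_pos_iff.2 hp
  rw [inner_smul_left, abs_mul]
  simp only [conj_trivial, abs_inv, abs_norm]
  calc F θ * (‖gradient F θ‖⁻¹ * |⟪gradient F θ, x⟫|)
      ≤ ‖gradient F θ‖ * (‖gradient F θ‖⁻¹ * |⟪gradient F θ, x⟫|) := by gcongr
    _ = |⟪gradient F θ, x⟫| := by rw [← mul_assoc, mul_inv_cancel₀ hp'.ne', one_mul]
    _ ≤ F x := h2

namespace IsFlowSol

variable {n : ℕ} {f : Euc n → ℝ} {φ : ℝ → ℝ} {H : ℝ → Euc n → ℝ}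

/-- If `h_t(θ)` is large, then `h_t ≥ s₁` outside a set of small measure, where `s₁ > max h_0`,
so that `∫ f g(h_t)` exceeds `g(s₁) ∫ f` by very little. As `g(s₁) ∫ f < ∫ f g(h_0)`, this
contradicts monotonicity. The exceptional set is controlled by the integral of `-log |⟨e, x⟩|`. -/
theorem exists_upper_bound (hn : 2 ≤ n) (hH : IsFlowSol n f φ (Ici 0) H)
    (hf : Continuous fun x : USphere n => f x) (hf_pos : ∀ x ∈ USphere n, 0 < f x)
    (hφ : ContinuousOn φ (Ioi 0)) (hφ_pos : ∀ s ∈ Ioi (0 : ℝ), 0 < φ s) {g : ℝ → ℝ}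
    (hg : ∀ s ∈ Ioi (0 : ℝ), HasDerivAt g (-(1 / (s * φ (1 / s)))) s) {c₀ : ℝ} (hc₀ : 0 < c₀)
    (hlow : ∀ t, 0 ≤ t → ∀ x ∈ USphere n, c₀ ≤ H t x) :
    ∃ C₀ : ℝ, ∀ t, 0 ≤ t → ∀ x ∈ USphere n, H t x ≤ C₀ := by
  have hgc : ContinuousOn g (Ioi 0) := fun s hs => (hg s hs).continuousAt.continuousWithinAt
  have hga : StrictAntiOn g (Ioi 0) := by
    refine strictAntiOn_of_deriv_neg (convex_Ioi 0) hgc fun s hs => ?_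
    rw [interior_Ioi] at hs
    rw [(hg s hs).deriv]
    have : 0 < φ (1 / s) := hφ_pos _ (mem_Ioi.2 (one_div_pos.2 hs))
    have hs' : 0 < s := hs
    exact neg_neg_of_pos (by positivity)
  let e₀ : Euc n := EuclideanSpace.single ⟨0, by omega⟩ 1
  have he₀ : e₀ ∈ USphere n := by simp [e₀]
  have b0 := hH.body 0 self_mem_Ici
  obtain ⟨M₀, hM₀⟩ := isCompact_univ.exists_bound_of_continuousOn
    (f := fun x : USphere n => H 0 x) b0.continuous_sphere.continuousOn
  obtain ⟨Fs, hFs⟩ := isCompact_univ.exists_bound_of_continuousOn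
    (f := fun x : USphere n => f x) hf.continuousOn
  set s₁ := M₀ + 1
  have hs₁ : ∀ x ∈ USphere n, H 0 x < s₁ := fun x hx => by
    have := (le_abs_self _).trans (hM₀ ⟨x, hx⟩ trivial)
    simp only [s₁]
    linarith
  have hc₁ : c₀ < s₁ := (hlow 0 le_rfl e₀ he₀).trans_lt (hs₁ e₀ he₀)
  have hs₁0 : 0 < s₁ := hc₀.trans hc₁
  have hFs0 : 0 ≤ Fs := (norm_nonneg _).trans (hFs ⟨e₀, he₀⟩ trivial)
  set m₀ := sphInt n fun x => f x * g (H 0 x) with hm₀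
  set If := sphInt n f with hIf
  have cg : ∀ t, 0 ≤ t → Continuous fun x : USphere n => f x * g (H t x) := fun t ht =>
    hf.mul (hgc.comp_continuous (hH.body t ht).continuous_sphere fun x => (hH.body t ht).pos _ x.2)
  have hd : 0 < m₀ - If * g s₁ := by
    have h1 : m₀ - If * g s₁ = sphInt n fun x => f x * g (H 0 x) - f x * g s₁ := by
      rw [hm₀, hIf, sphInt, sphInt, sphInt, ← integral_mul_const]
      exact (integral_sub (integrable_sphere_of_continuous (cg 0 le_rfl))
        ((integrable_sphere_of_continuous hf).mul_const _)).symm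
    rw [h1]
    refine sphInt_pos hn ((cg 0 le_rfl).sub (hf.mul continuous_const)) fun x hx => ?_
    rw [← mul_sub]
    exact mul_pos (hf_pos x hx) (sub_pos.2 (hga (b0.pos x hx) hs₁0 (hs₁ x hx)))
  set d := m₀ - If * g s₁ with hd_def
  set c := sphInt n fun u => Real.log |⟪e₀, u⟫| with hc
  have hc0 : c ≤ 0 := sphInt_log_inner_nonpos he₀
  set A := g c₀ - g s₁ with hA
  have hA0 : 0 < A := sub_pos.2 (hga hc₀ hs₁0 hc₁)
  -- The exceptional set is `|⟨e, x⟩| < exp (-Λ)`, and `A Fs (-c) / Λ` bounds the error made on it,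
  -- so `Λ` is chosen to make this smaller than `d`.
  set Λ := (A * Fs * (-c) + 1) / d with hΛ
  have hB : 0 ≤ A * Fs * (-c) := mul_nonneg (mul_nonneg hA0.le hFs0) (neg_nonneg.2 hc0)
  have hΛ0 : 0 < Λ := by positivity
  refine ⟨s₁ * Real.exp Λ, fun t ht θ hθ => ?_⟩
  by_contra hbig
  push Not at hbig
  have bt := hH.body t ht
  obtain ⟨e, he, hdir⟩ := bt.exists_direction (hH.symm t ht) hθ
  have hle : m₀ ≤ sphInt n (fun x => f x * g (H t x)) :=
    hH.potential_le hn hf hf_pos hφ hφ_pos hg ht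
  have hlog := integrable_log_inner hn he
  have hlog' : Integrable (fun x : USphere n => A * Fs / Λ * (-Real.log |⟪e, (x : Euc n)⟫|))
    (sphMeasure n) := hlog.neg.const_mul _
  have hf' := (integrable_sphere_of_continuous hf).mul_const (g s₁)
  have h2 : sphInt n (fun x => f x * g (H t x)) ≤
      sphInt n (fun x => f x * g s₁ + A * Fs / Λ * (-Real.log |⟪e, x⟫|)) := by
    refine integral_mono_ae (integrable_sphere_of_continuous (cg t ht)) (hf'.add hlog') ?_
    filter_upwards [ae_inner_ne_zero he] with x hx
    have hfx := hf_pos _ x.2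
    have hFx : f x ≤ Fs := (le_abs_self _).trans (hFs x trivial)
    have ha0 : 0 < |⟪e, (x : Euc n)⟫| := abs_pos.2 hx
    have hℓ : 0 ≤ -Real.log |⟪e, (x : Euc n)⟫| := by
      refine neg_nonneg.2 (Real.log_nonpos ha0.le ?_)
      have hne : ‖e‖ = 1 := by simpa using he
      simpa [hne] using abs_real_inner_le_norm e (x : Euc n)
    by_cases hx' : -Real.log |⟪e, (x : Euc n)⟫| ≤ Λ
    · have h3 : Real.exp (-Λ) ≤ |⟪e, (x : Euc n)⟫| := by
        rw [← Real.le_log_iff_exp_le ha0]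
        linarith
      have h4 : s₁ ≤ H t x := by
        refine le_trans ?_ (hdir x x.2)
        calc s₁ = s₁ * Real.exp Λ * Real.exp (-Λ) := by
              rw [mul_assoc, ← Real.exp_add, add_neg_cancel, Real.exp_zero, mul_one]
          _ ≤ H t θ * |⟪e, (x : Euc n)⟫| :=
              mul_le_mul hbig.le h3 (Real.exp_pos _).le (bt.pos θ hθ).le
      have h5 : g (H t x) ≤ g s₁ := hga.antitoneOn hs₁0 (bt.pos _ x.2) h4
      have h6 : 0 ≤ A * Fs / Λ * (-Real.log |⟪e, (x : Euc n)⟫|) := by positivity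
      nlinarith [mul_le_mul_of_nonneg_left h5 hfx.le]
    · push Not at hx'
      have h5 : g (H t x) ≤ g c₀ := hga.antitoneOn hc₀ (bt.pos _ x.2) (hlow t ht _ x.2)
      have h6 : A * Fs ≤ A * Fs / Λ * (-Real.log |⟪e, (x : Euc n)⟫|) := by
        rw [div_mul_eq_mul_div, le_div_iff₀ hΛ0]
        exact mul_le_mul_of_nonneg_left hx'.le (by positivity)
      calc f x * g (H t x) ≤ f x * g c₀ := mul_le_mul_of_nonneg_left h5 hfx.le
        _ = f x * g s₁ + A * f x := by rw [hA]; ring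
        _ ≤ f x * g s₁ + A * Fs := by gcongr
        _ ≤ _ := by gcongr
  have h7 : sphInt n (fun x => f x * g s₁ + A * Fs / Λ * (-Real.log |⟪e, x⟫|)) =
      If * g s₁ + A * Fs / Λ * (-c) := by
    rw [hc, sphInt_log_inner_eq he₀ he, hIf, sphInt, sphInt, sphInt, ← integral_neg,
      ← integral_const_mul, ← integral_mul_const]
    exact integral_add hf' hlog'
  have h8 : A * Fs / Λ * (-c) < d := by
    rw [div_mul_eq_mul_div, div_lt_iff₀ hΛ0, hΛ, mul_div_cancel₀ _ hd.ne']
    linarith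
  linarith

end IsFlowSol

/-- Either structural condition provides the function `g(s) = ± ℜ(1/s)`. -/
theorem exists_potential {n : ℕ} {f : Euc n → ℝ} {φ : ℝ → ℝ} {h₀ : Euc n → ℝ}
    (hcond : CondI n f φ h₀ ∨ CondII φ) :
    ∃ g : ℝ → ℝ, ∀ s ∈ Ioi (0 : ℝ), HasDerivAt g (-(1 / (s * φ (1 / s)))) s := by
  rcases hcond with ⟨R, -, -, -, -, -, hR, -⟩ | ⟨R, -, -, -, -, -, hR⟩
  · refine ⟨fun s => R s⁻¹, fun s hs => ?_⟩
    have hs0 : s ≠ 0 := ne_of_gt hs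
    refine HasDerivAt.congr_deriv
      ((hR s⁻¹ (mem_Ioi.2 (inv_pos.2 hs))).1.comp s (hasDerivAt_inv hs0)) ?_
    simp only [one_div, mul_inv, inv_inv]
    field_simp
  · refine ⟨fun s => -R s⁻¹, fun s hs => ?_⟩
    have hs0 : s ≠ 0 := ne_of_gt hs
    refine HasDerivAt.congr_deriv
      ((hR s⁻¹ (mem_Ioi.2 (inv_pos.2 hs))).1.comp s (hasDerivAt_inv hs0)).neg ?_
    simp only [one_div, mul_inv, inv_inv]
    field_simp

theorem radialFn_mem_Icc {n : ℕ} {F : Euc n → ℝ} {c₀ C₀ : ℝ} (hc₀ : 0 < c₀)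
    (hlow : ∀ x ∈ USphere n, c₀ ≤ F x) (hup : ∀ x ∈ USphere n, F x ≤ C₀) {u : Euc n}
    (hu : u ∈ USphere n) : radialFn n F u ∈ Icc c₀ C₀ := by
  have hnu : ‖u‖ = 1 := by simpa using hu
  have h1 : c₀ ∈ {r : ℝ | 0 < r ∧ r • u ∈ bodyOf n F} := by
    refine ⟨hc₀, fun x hx => le_trans ?_ (hlow x hx)⟩
    have hnx : ‖x‖ = 1 := by simpa using hx
    have h := real_inner_le_norm x u
    rw [hnx, hnu, one_mul] at h
    rw [inner_smul_right]
    nlinarith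
  have h2 : ∀ r ∈ {r : ℝ | 0 < r ∧ r • u ∈ bodyOf n F}, r ≤ C₀ := by
    rintro r ⟨-, hr⟩
    have h := (hr u hu).trans (hup u hu)
    rwa [inner_smul_right, real_inner_self_eq_norm_sq, hnu, one_pow, mul_one] at h
  exact ⟨le_csSup ⟨C₀, h2⟩ h1, csSup_le ⟨c₀, h1⟩ h2⟩

theorem IsFlowSol.flowEta_bounds {n : ℕ} {f : Euc n → ℝ} {φ : ℝ → ℝ} {H : ℝ → Euc n → ℝ}
    (hn : 2 ≤ n) (hH : IsFlowSol n f φ (Ici 0) H)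
    (hf : Continuous fun x : USphere n => f x) (hf_pos : ∀ x ∈ USphere n, 0 < f x)
    (hφ : ContinuousOn φ (Ioi 0)) (hφ_pos : ∀ s ∈ Ioi (0 : ℝ), 0 < φ s) {c₀ C₀ : ℝ} (hc₀ : 0 < c₀)
    (hlow : ∀ t, 0 ≤ t → ∀ x ∈ USphere n, c₀ ≤ H t x)
    (hup : ∀ t, 0 ≤ t → ∀ x ∈ USphere n, H t x ≤ C₀) :
    ∃ a b : ℝ, 0 < a ∧ 0 < b ∧ ∀ t, 0 ≤ t → a ≤ flowEta n f φ (H t) ∧ flowEta n f φ (H t) ≤ b := by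
  let e₀ : Euc n := EuclideanSpace.single ⟨0, by omega⟩ 1
  have he₀ : e₀ ∈ USphere n := by simp [e₀]
  have hcC : c₀ ≤ C₀ := (hlow 0 le_rfl e₀ he₀).trans (hup 0 le_rfl e₀ he₀)
  have hC₀ : 0 < C₀ := hc₀.trans_le hcC
  have hA := sphArea_pos hn
  have hI : Icc (1 / C₀) (1 / c₀) ⊆ Ioi 0 := fun s hs => (one_div_pos.2 hC₀).trans_le hs.1
  have hIne : (Icc (1 / C₀) (1 / c₀)).Nonempty :=
    nonempty_Icc.2 (one_div_le_one_div_of_le hc₀ hcC)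
  obtain ⟨p, hp, hpmin⟩ := isCompact_Icc.exists_isMinOn hIne (hφ.mono hI)
  obtain ⟨q, hq, hqmax⟩ := isCompact_Icc.exists_isMaxOn hIne (hφ.mono hI)
  obtain ⟨y, -, hymin⟩ := isCompact_univ.exists_isMinOn ⟨(⟨e₀, he₀⟩ : USphere n), trivial⟩
    hf.continuousOn
  obtain ⟨z, -, hzmax⟩ := isCompact_univ.exists_isMaxOn ⟨(⟨e₀, he₀⟩ : USphere n), trivial⟩
    hf.continuousOn
  have p0 := hφ_pos p (hI hp)
  have q0 := hφ_pos q (hI hq)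
  have y0 := hf_pos y y.2
  have z0 := hf_pos z z.2
  refine ⟨φ p / f z, φ q / f y, by positivity, by positivity, fun t ht => ?_⟩
  have hD := hH.sphInt_flowDens_pos hn hf hf_pos hφ hφ_pos ht
  have hDi := integrable_sphere_of_continuous (hH.continuous_flowDens hf hφ hφ_pos ht)
  have hmem : ∀ x : USphere n, 1 / H t x ∈ Icc (1 / C₀) (1 / c₀) := fun x =>
    ⟨one_div_le_one_div_of_le ((hH.body t ht).pos _ x.2) (hup t ht _ x.2),
      one_div_le_one_div_of_le hc₀ (hlow t ht _ x.2)⟩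
  have h1 : sphArea n * (f y / φ q) ≤ sphInt n (flowDens f φ (H t)) := by
    rw [← sphInt_const]
    refine integral_mono (integrable_const _) hDi fun x => ?_
    exact div_le_div₀ (hf_pos _ x.2).le (hymin trivial) (hφ_pos _ (hI (hmem x))) (hqmax (hmem x))
  have h2 : sphInt n (flowDens f φ (H t)) ≤ sphArea n * (f z / φ p) := by
    rw [← sphInt_const]
    refine integral_mono hDi (integrable_const _) fun x => ?_
    exact div_le_div₀ z0.le (hzmax trivial) p0 (hpmin (hmem x))
  change φ p / f z ≤ sphArea n / sphInt n (flowDens f φ (H t)) ∧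
    sphArea n / sphInt n (flowDens f φ (H t)) ≤ φ q / f y
  constructor
  · rw [div_le_div_iff₀ z0 hD]
    calc φ p * sphInt n (flowDens f φ (H t)) ≤ φ p * (sphArea n * (f z / φ p)) := by gcongr
      _ = sphArea n * f z := by field_simp
  · rw [div_le_div_iff₀ hD y0]
    calc sphArea n * f y = φ q * (sphArea n * (f y / φ q)) := by field_simp
      _ ≤ φ q * sphInt n (flowDens f φ (H t)) := by gcongr

/-- uniform `C⁰` estimates for the support and radial functions and for `η`. -/
theorem C0_estimates
    (n : ℕ) (hn : 2 ≤ n)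
    (f : Euc n → ℝ) (φ : ℝ → ℝ) (h₀ : Euc n → ℝ)
    (hf_smooth : ContDiffOn ℝ (⊤ : ℕ∞) f {(0 : Euc n)}ᶜ)
    (hf_pos : ∀ x ∈ USphere n, 0 < f x)
    (hf_even : ∀ x : Euc n, f (-x) = f x)
    (hφ_smooth : ContDiffOn ℝ (⊤ : ℕ∞) φ (Ioi 0))
    (hφ_pos : ∀ s ∈ Ioi (0 : ℝ), 0 < φ s)
    (hh₀ : IsSupportFn n h₀) (hh₀e : ∀ x : Euc n, h₀ (-x) = h₀ x)
    (hcond : CondI n f φ h₀ ∨ CondII φ)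
    (H : ℝ → Euc n → ℝ) (hH : IsFlowSol n f φ (Ici 0) H) (hH0 : H 0 = h₀) :
    ∃ C : ℝ, 0 < C ∧ ∀ t ∈ Ioi (0 : ℝ),
      (∀ x ∈ USphere n, 1 / C ≤ H t x ∧ H t x ≤ C) ∧
      (∀ u ∈ USphere n, 1 / C ≤ radialFn n (H t) u ∧ radialFn n (H t) u ≤ C) ∧
      (1 / C ≤ flowEta n f φ (H t) ∧ flowEta n f φ (H t) ≤ C) := by
  have hf : Continuous fun x : USphere n => f x :=
    continuous_sphere_of_continuousOn hf_smooth.continuousOn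
  have hφ := hφ_smooth.continuousOn
  obtain ⟨g, hg⟩ := exists_potential hcond
  obtain ⟨c₀, hc₀, hlow⟩ := hH.exists_lower_bound hn hf hf_pos hφ hφ_pos
  obtain ⟨C₀, hup⟩ := hH.exists_upper_bound hn hf hf_pos hφ hφ_pos hg hc₀ hlow
  obtain ⟨a, b, ha, hb, hη⟩ := hH.flowEta_bounds hn hf hf_pos hφ hφ_pos hc₀ hlow hup
  let C := max (max c₀⁻¹ C₀) (max a⁻¹ b)
  have hC1 : c₀⁻¹ ≤ C := (le_max_left _ _).trans (le_max_left _ _)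
  have hC2 : C₀ ≤ C := (le_max_right _ _).trans (le_max_left _ _)
  have hC3 : a⁻¹ ≤ C := (le_max_left _ _).trans (le_max_right _ _)
  have hC4 : b ≤ C := (le_max_right _ _).trans (le_max_right _ _)
  have h1 : 1 / C ≤ c₀ := by
    rw [one_div]
    exact inv_le_of_inv_le₀ hc₀ hC1
  have h2 : 1 / C ≤ a := by
    rw [one_div]
    exact inv_le_of_inv_le₀ ha hC3
  refine ⟨C, hb.trans_le hC4, fun t ht => ?_⟩
  have ht0 : 0 ≤ t := le_of_lt ht
  refine ⟨fun x hx => ⟨h1.trans (hlow t ht0 x hx), (hup t ht0 x hx).trans hC2⟩,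
    fun u hu => ?_, h2.trans (hη t ht0).1, (hη t ht0).2.trans hC4⟩
  have := radialFn_mem_Icc hc₀ (hlow t ht0) (hup t ht0) hu
  exact ⟨h1.trans this.1, this.2.trans hC2⟩
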